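/- arXiv:dg-ga/9505007 — 7 statements merged into one kernel-verified Lean document; each statement's English description precedes it below -/
import Mathlib

section
/- Let Γ be a nontrivial finite group and ρ: Γ → O(n+1) a fixed point free orthogonal representation. Then the spherical space form S^n/ρ(Γ) has radius at least π/2 if and only if every orbit of ρ(Γ) on S^n is contained in a proper ρ(Γ)-invariant linear subspace of ℝ^{n+1} (i.e., a proper invariant totally geodesic subsphere). Moreover, when this holds the radius equals exactly π/2. Concretely: (for every unit vector u ∈ ℝ^{n+1} there exists a unit vector v with ⟨ρ(g)u, v⟩ ≤ 0 for all g ∈ Γ) if and only if (for every unit vector u, the linear span of the orbit {ρ(g)u : g ∈ Γ} is a proper subspace of ℝ^{n+1}). -/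
open scoped RealInnerProductSpace

/-- The radius of the spherical space form `Sⁿ/ρ(Γ)`:
`rad = min over orbits Γu of max over orbits Γv of dist(Γu,Γv)`, where
`dist(Γu,Γv) = min_{g∈Γ} arccos ⟪ρ(g)u, v⟫`.  Orbits are parametrized by
unit vectors (the quantities involved depend only on the orbits). -/
noncomputable def sphereQuotRadius {Γ : Type*} [Group Γ] [Fintype Γ]
    {E : Type*} [NormedAddCommGroup E] [InnerProductSpace ℝ E]
    (ρ : Γ →* (E ≃ₗᵢ[ℝ] E)) : ℝ :=
  ⨅ u : {x : E // ‖x‖ = 1}, ⨆ v : {x : E // ‖x‖ = 1}, ⨅ g : Γ,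
    Real.arccos ⟪ρ g u.1, v.1⟫

/-!
The sum of an orbit is a fixed vector, so it vanishes when `0` is the only fixed vector. Hence for
every `v` the inner products `⟪ρ g u, v⟫` sum to zero over `g`: they are all nonpositive only if
they are all zero, that is, only if `v` is orthogonal to the span of the orbit of `u`, and at least
one of them is nonnegative, so that `v` lies within distance `π / 2` of the orbit of `u`.
-/

section Orbit

variable {Γ R E : Type*} [Group Γ] [Fintype Γ] [Semiring R] [SeminormedAddCommGroup E] [Module R E]

theorem map_sum_orbit (ρ : Γ →* (E ≃ₗᵢ[R] E)) (h : Γ) (u : E) :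
    ρ h (∑ g, ρ g u) = ∑ g, ρ g u :=
  calc
    ρ h (∑ g, ρ g u) = ∑ g, ρ (h * g) u := by
      simp only [map_sum, map_mul, LinearIsometryEquiv.coe_mul, Function.comp_apply]
    _ = ∑ g, ρ g u := Equiv.sum_comp (Equiv.mulLeft h) fun g => ρ g u

theorem sum_orbit_eq_zero {ρ : Γ →* (E ≃ₗᵢ[R] E)}
    (hfix : ∀ x : E, (∀ g, ρ g x = x) → x = 0) (u : E) : ∑ g, ρ g u = 0 :=
  hfix _ fun h => map_sum_orbit ρ h u

end Orbit

section Orthogonal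

variable {𝕜 E : Type*} [RCLike 𝕜] [NormedAddCommGroup E] [InnerProductSpace 𝕜 E]

theorem exists_norm_eq_one_mem_orthogonal_iff_ne_top (K : Submodule 𝕜 E)
    [K.HasOrthogonalProjection] : (∃ v : E, ‖v‖ = 1 ∧ v ∈ Kᗮ) ↔ K ≠ ⊤ := by
  rw [Ne, ← Submodule.orthogonal_eq_bot_iff, ← Ne, Submodule.ne_bot_iff]
  constructor
  · rintro ⟨v, hv, hvK⟩
    exact ⟨v, hvK, ne_zero_of_norm_ne_zero (hv ▸ one_ne_zero)⟩
  · rintro ⟨w, hwK, hw⟩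
    exact ⟨(‖w‖⁻¹ : 𝕜) • w, norm_smul_inv_norm hw, Submodule.smul_mem _ _ hwK⟩

theorem mem_orthogonal_span_range_iff {ι : Type*} (f : ι → E) (v : E) :
    v ∈ (Submodule.span 𝕜 (Set.range f))ᗮ ↔ ∀ i, inner 𝕜 (f i) v = 0 := by
  rw [← Submodule.span_singleton_le_iff_mem, ← Submodule.isOrtho_iff_le, Submodule.isOrtho_comm,
    Submodule.isOrtho_span]
  simp only [Set.forall_mem_range, Set.mem_singleton_iff, forall_eq]

theorem exists_norm_eq_one_forall_inner_eq_zero_iff_span_ne_top {ι : Type*} [Finite ι]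
    (f : ι → E) :
    (∃ v : E, ‖v‖ = 1 ∧ ∀ i, inner 𝕜 (f i) v = 0) ↔ Submodule.span 𝕜 (Set.range f) ≠ ⊤ := by
  have : FiniteDimensional 𝕜 (Submodule.span 𝕜 (Set.range f)) :=
    FiniteDimensional.span_of_finite 𝕜 (Set.finite_range f)
  simp only [← mem_orthogonal_span_range_iff, exists_norm_eq_one_mem_orthogonal_iff_ne_top]

end Orthogonal

section Family

variable {ι E : Type*} [Fintype ι] [NormedAddCommGroup E] [InnerProductSpace ℝ E] {f : ι → E}

theorem sum_inner_eq_zero_of_sum_eq_zero (hf : ∑ i, f i = 0) (v : E) : ∑ i, ⟪f i, v⟫ = 0 := by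
  rw [← sum_inner, hf, inner_zero_left]

theorem forall_inner_nonpos_iff_of_sum_eq_zero (hf : ∑ i, f i = 0) (v : E) :
    (∀ i, ⟪f i, v⟫ ≤ 0) ↔ ∀ i, ⟪f i, v⟫ = 0 := by
  refine ⟨fun h i => ?_, fun h i => (h i).le⟩
  exact (Finset.sum_eq_zero_iff_of_nonpos fun i _ => h i).mp
    (sum_inner_eq_zero_of_sum_eq_zero hf v) i (Finset.mem_univ i)

theorem iInf_arccos_inner_le_pi_div_two [Nonempty ι] (hf : ∑ i, f i = 0) (v : E) :
    ⨅ i, Real.arccos ⟪f i, v⟫ ≤ Real.pi / 2 := by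
  obtain ⟨i, -, hi⟩ : ∃ i ∈ Finset.univ, 0 ≤ ⟪f i, v⟫ :=
    Finset.exists_le_of_sum_le Finset.univ_nonempty <| by
      rw [Finset.sum_const_zero, sum_inner_eq_zero_of_sum_eq_zero hf]
  exact (ciInf_le (Set.finite_range _).bddBelow i).trans (Real.arccos_le_pi_div_two.mpr hi)

theorem iSup_iInf_arccos_inner_eq_pi_div_two [Nonempty ι] (hf : ∑ i, f i = 0)
    (hspan : Submodule.span ℝ (Set.range f) ≠ ⊤) :
    ⨆ v : {x : E // ‖x‖ = 1}, ⨅ i, Real.arccos ⟪f i, v.1⟫ = Real.pi / 2 := by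
  obtain ⟨v, hv, hfv⟩ := (exists_norm_eq_one_forall_inner_eq_zero_iff_span_ne_top f).mpr hspan
  have : Nonempty {x : E // ‖x‖ = 1} := ⟨⟨v, hv⟩⟩
  have le_half_pi (w : {x : E // ‖x‖ = 1}) : ⨅ i, Real.arccos ⟪f i, w.1⟫ ≤ Real.pi / 2 :=
    iInf_arccos_inner_le_pi_div_two hf w.1
  have eq_half_pi : ⨅ i, Real.arccos ⟪f i, v⟫ = Real.pi / 2 := by
    simp only [hfv, Real.arccos_zero, ciInf_const]
  refine le_antisymm (ciSup_le le_half_pi) ?_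
  exact le_ciSup_of_le ⟨Real.pi / 2, Set.forall_mem_range.mpr le_half_pi⟩ ⟨v, hv⟩ eq_half_pi.ge

end Family

theorem radius_ge_half_pi_iff_orbits_in_proper_invariant_subspace_general
    {Γ E : Type*} [Group Γ] [Fintype Γ] [NormedAddCommGroup E] [InnerProductSpace ℝ E]
    [Nontrivial E] (ρ : Γ →* (E ≃ₗᵢ[ℝ] E)) (hfix : ∀ x : E, (∀ g, ρ g x = x) → x = 0) :
    ((∀ u : E, ‖u‖ = 1 → ∃ v : E, ‖v‖ = 1 ∧ ∀ g, ⟪ρ g u, v⟫ ≤ 0) ↔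
      (∀ u : E, ‖u‖ = 1 → Submodule.span ℝ (Set.range fun g => ρ g u) ≠ ⊤)) ∧
    ((∀ u : E, ‖u‖ = 1 → Submodule.span ℝ (Set.range fun g => ρ g u) ≠ ⊤) →
      sphereQuotRadius ρ = Real.pi / 2) := by
  have sum_orbit (u : E) : ∑ g, ρ g u = 0 := sum_orbit_eq_zero hfix u
  constructor
  · simp only [forall_inner_nonpos_iff_of_sum_eq_zero (sum_orbit _),
      exists_norm_eq_one_forall_inner_eq_zero_iff_span_ne_top]
  · intro hspan
    have farthest_eq (u : {x : E // ‖x‖ = 1}) :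
        ⨆ v : {x : E // ‖x‖ = 1}, ⨅ g, Real.arccos ⟪ρ g u.1, v.1⟫ = Real.pi / 2 :=
      iSup_iInf_arccos_inner_eq_pi_div_two (sum_orbit u.1) (hspan u.1 u.2)
    have : Nonempty {x : E // ‖x‖ = 1} := nonempty_subtype.mpr (exists_norm_eq E zero_le_one)
    simp only [sphereQuotRadius, farthest_eq, ciInf_const]

/-- For a nontrivial finite group `Γ` with a fixed point free orthogonal representation
`ρ : Γ → O(n+1)`, the space form `Sⁿ/ρ(Γ)` has radius `≥ π/2` (concretely: for every
unit vector `u` there is a unit vector `v` with `⟪ρ(g)u, v⟫ ≤ 0` for all `g`) if and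
only if every orbit spans a proper (automatically invariant) subspace of `ℝ^{n+1}`;
moreover in that case the radius is exactly `π/2`. -/
theorem radius_ge_half_pi_iff_orbits_in_proper_invariant_subspace
    {n : ℕ} {Γ : Type*} [Group Γ] [Fintype Γ] [Nontrivial Γ]
    (ρ : Γ →* (EuclideanSpace ℝ (Fin (n + 1)) ≃ₗᵢ[ℝ] EuclideanSpace ℝ (Fin (n + 1))))
    (hfree : ∀ g : Γ, g ≠ 1 → ∀ x : EuclideanSpace ℝ (Fin (n + 1)), x ≠ 0 → ρ g x ≠ x) :
    ((∀ u : EuclideanSpace ℝ (Fin (n + 1)), ‖u‖ = 1 →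
        ∃ v : EuclideanSpace ℝ (Fin (n + 1)), ‖v‖ = 1 ∧ ∀ g : Γ, ⟪ρ g u, v⟫ ≤ 0) ↔
      (∀ u : EuclideanSpace ℝ (Fin (n + 1)), ‖u‖ = 1 →
        Submodule.span ℝ (Set.range fun g : Γ => ρ g u) ≠ ⊤)) ∧
    ((∀ u : EuclideanSpace ℝ (Fin (n + 1)), ‖u‖ = 1 →
        Submodule.span ℝ (Set.range fun g : Γ => ρ g u) ≠ ⊤) →
      sphereQuotRadius ρ = Real.pi / 2) := by
  obtain ⟨g, hg⟩ := exists_ne (1 : Γ)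
  exact radius_ge_half_pi_iff_orbits_in_proper_invariant_subspace_general ρ fun x hx =>
    by_contra fun hx0 => hfree g hg x hx0 (hx g)
end

section
/- Let Γ be a finite group and ρ: Γ → O(n+1) a fixed point free orthogonal representation that decomposes as an orthogonal direct sum ρ = ρ₁ ⊕ ρ₂ ⊕ ⋯ ⊕ ρ_k of k ≥ 2 irreducible subrepresentations. If the quotient S^n/ρ(Γ) has radius π/2 (equivalently, for every unit vector u ∈ ℝ^{n+1} there is a unit vector v with ⟨ρ(g)u, v⟩ ≤ 0 for all g ∈ Γ), then ρ_i is equivalent to ρ_j for some i ≠ j. -/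
open scoped RealInnerProductSpace

section Defs

variable {Γ : Type*} [Group Γ] {E : Type*} [NormedAddCommGroup E] [InnerProductSpace ℝ E]

/-- A subspace `W` is invariant under the orthogonal representation `ρ`. -/
def IsInvariantSubspace (ρ : Γ →* (E ≃ₗᵢ[ℝ] E)) (W : Submodule ℝ E) : Prop :=
  ∀ g : Γ, ∀ x ∈ W, ρ g x ∈ W

/-- A nonzero invariant subspace `W` is an irreducible subrepresentation of `ρ` if it
contains no invariant subspace other than `⊥` and itself. -/
def IsIrreducibleSubrep (ρ : Γ →* (E ≃ₗᵢ[ℝ] E)) (W : Submodule ℝ E) : Prop :=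
  W ≠ ⊥ ∧ IsInvariantSubspace ρ W ∧
    ∀ U : Submodule ℝ E, U ≤ W → IsInvariantSubspace ρ U → U = ⊥ ∨ U = W

/-- Two invariant subspaces carry equivalent subrepresentations of `ρ` if there is an
orthogonal (isometric linear) isomorphism between them intertwining the actions. -/
def AreEquivalentSubreps (ρ : Γ →* (E ≃ₗᵢ[ℝ] E)) (W₁ W₂ : Submodule ℝ E) : Prop :=
  ∃ e : W₁ ≃ₗᵢ[ℝ] W₂, ∀ (g : Γ) (x : W₁) (hx : ρ g (x : E) ∈ W₁),
    ((e ⟨ρ g (x : E), hx⟩ : W₂) : E) = ρ g ((e x : W₂) : E)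

end Defs

/-
If no two summands are equivalent, Schur's lemma shows that the summands are the only irreducible
subspaces and that they are pairwise orthogonal. The sum `s` of one nonzero vector from each of them
is then cyclic: otherwise the orthogonal complement of the span of its orbit contains an irreducible
subspace, although `s` has a nonzero component there. Two independent fixed vectors would span
non-orthogonal irreducible lines, so the fixed space is at most a line, and a free action of a
nontrivial group fixes no line. Suppose now that `⟪ρ g s, v⟫ ≤ 0` for all `g`. For a finite group
the orbit of `s` sums to `0`, so all these inner products vanish; for an arbitrary group the sum is
replaced by the vector of least norm of a closed convex invariant set, which is fixed and hence `0`.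
Thus `v` is orthogonal to the span of the orbit of `s`, which is everything, and `v = 0`.
-/

section Representation

variable {Γ : Type*} [Group Γ] {E : Type*} [NormedAddCommGroup E] [InnerProductSpace ℝ E]
  {ρ : Γ →* (E ≃ₗᵢ[ℝ] E)}

/-! ### Invariant subspaces -/

/-- The subspace of vectors fixed by every `ρ g`, i.e. the isotypic part of the trivial
representation. -/
def fixedSubspace (ρ : Γ →* (E ≃ₗᵢ[ℝ] E)) : Submodule ℝ E where
  carrier := {x | ∀ g, ρ g x = x}
  add_mem' hx hy g := by rw [map_add, hx g, hy g]
  zero_mem' g := map_zero (ρ g)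
  smul_mem' c x hx g := by rw [map_smul, hx g]

/-- The cyclic subrepresentation generated by `u`. -/
def orbitSpan (ρ : Γ →* (E ≃ₗᵢ[ℝ] E)) (u : E) : Submodule ℝ E :=
  Submodule.span ℝ (Set.range fun g => ρ g u)

lemma inner_rep_left (ρ : Γ →* (E ≃ₗᵢ[ℝ] E)) (g : Γ) (x y : E) :
    ⟪ρ g x, y⟫ = ⟪x, ρ g⁻¹ y⟫ := by
  rw [LinearIsometryEquiv.inner_map_eq_flip, map_inv, LinearIsometryEquiv.coe_inv]

lemma rep_mul_apply (ρ : Γ →* (E ≃ₗᵢ[ℝ] E)) (g h : Γ) (x : E) : ρ (g * h) x = ρ g (ρ h x) := by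
  rw [map_mul, LinearIsometryEquiv.coe_mul, Function.comp_apply]

lemma rep_mem_orbitSpan (ρ : Γ →* (E ≃ₗᵢ[ℝ] E)) (g : Γ) (u : E) : ρ g u ∈ orbitSpan ρ u :=
  Submodule.subset_span ⟨g, rfl⟩

lemma mem_orbitSpan_self (ρ : Γ →* (E ≃ₗᵢ[ℝ] E)) (u : E) : u ∈ orbitSpan ρ u := by
  simpa using rep_mem_orbitSpan ρ 1 u

lemma isInvariantSubspace_orbitSpan (ρ : Γ →* (E ≃ₗᵢ[ℝ] E)) (u : E) :
    IsInvariantSubspace ρ (orbitSpan ρ u) := by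
  intro g
  suffices orbitSpan ρ u ≤ (orbitSpan ρ u).comap (ρ g).toLinearMap from fun x hx => this hx
  refine Submodule.span_le.2 ?_
  rintro _ ⟨h, rfl⟩
  change ρ g (ρ h u) ∈ orbitSpan ρ u
  rw [← rep_mul_apply]
  exact rep_mem_orbitSpan ρ (g * h) u

lemma IsInvariantSubspace.orthogonal {W : Submodule ℝ E} (hW : IsInvariantSubspace ρ W) :
    IsInvariantSubspace ρ Wᗮ := by
  intro g x hx y hy
  rw [real_inner_comm, inner_rep_left, real_inner_comm]
  exact hx _ (hW g⁻¹ y hy)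

lemma IsInvariantSubspace.starProjection_rep {W : Submodule ℝ E} [W.HasOrthogonalProjection]
    (hW : IsInvariantSubspace ρ W) (g : Γ) (x : E) :
    W.starProjection (ρ g x) = ρ g (W.starProjection x) := by
  refine Submodule.eq_starProjection_of_mem_orthogonal
    (hW g _ (W.starProjection_apply_mem x)) ?_
  rw [← map_sub]
  exact hW.orthogonal g _ (Submodule.sub_starProjection_mem_orthogonal x)

lemma finrank_fixedSubspace_ne_one_of_free (hE : Module.finrank ℝ E ≠ 1)
    (hfree : ∀ g : Γ, g ≠ 1 → ∀ x : E, x ≠ 0 → ρ g x ≠ x) :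
    Module.finrank ℝ (fixedSubspace ρ) ≠ 1 := by
  rcases subsingleton_or_nontrivial Γ with _ | _
  · have htop : fixedSubspace ρ = ⊤ := eq_top_iff.2 fun x _ g => by simp [Subsingleton.elim g 1]
    rwa [htop, finrank_top]
  · obtain ⟨g, hg⟩ := exists_ne (1 : Γ)
    have hbot : fixedSubspace ρ = ⊥ := (Submodule.eq_bot_iff _).2 fun x hx => by
      by_contra hx₀
      exact hfree g hg x hx₀ (hx g)
    rw [hbot, finrank_bot]
    exact zero_ne_one

lemma one_lt_finrank_of_isOrtho [FiniteDimensional ℝ E] {W₁ W₂ : Submodule ℝ E} (h₁ : W₁ ≠ ⊥)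
    (h₂ : W₂ ≠ ⊥) (hW : W₁ ⟂ W₂) : 1 < Module.finrank ℝ E := by
  have hle := Submodule.finrank_add_finrank_le_of_disjoint hW.disjoint
  have h₁' := Submodule.one_le_finrank_iff.2 h₁
  have h₂' := Submodule.one_le_finrank_iff.2 h₂
  lia

/-! ### Irreducible subspaces and Schur's lemma -/

lemma IsIrreducibleSubrep.eq_of_le {W U : Submodule ℝ E} (hW : IsIrreducibleSubrep ρ W)
    (hU : IsInvariantSubspace ρ U) (hU₀ : U ≠ ⊥) (hle : U ≤ W) : U = W :=
  (hW.2.2 U hle hU).resolve_left hU₀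

lemma IsInvariantSubspace.exists_isIrreducibleSubrep_le [FiniteDimensional ℝ E]
    {U : Submodule ℝ E} (hU : IsInvariantSubspace ρ U) (hU₀ : U ≠ ⊥) :
    ∃ W ≤ U, IsIrreducibleSubrep ρ W := by
  obtain ⟨W, hWU, hW⟩ := exists_minimal_le_of_wellFoundedLT
    (fun W : Submodule ℝ E => W ≠ ⊥ ∧ IsInvariantSubspace ρ W) U ⟨hU₀, hU⟩
  refine ⟨W, hWU, hW.prop.1, hW.prop.2, fun X hXW hX => or_iff_not_imp_left.2 fun hX₀ => ?_⟩
  exact hW.eq_of_le ⟨hX₀, hX⟩ hXW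

lemma isIrreducibleSubrep_span_singleton {x : E} (hx : x ∈ fixedSubspace ρ) (hx₀ : x ≠ 0) :
    IsIrreducibleSubrep ρ (ℝ ∙ x) := by
  refine ⟨by simpa using hx₀, fun g y hy => ?_, fun U hU _ =>
    (nonzero_span_atom x hx₀).le_iff.1 hU⟩
  obtain ⟨c, rfl⟩ := Submodule.mem_span_singleton.1 hy
  rwa [map_smul, hx g]

lemma IsIrreducibleSubrep.exists_eq_smul_of_isSymmetric {W : Submodule ℝ E}
    [FiniteDimensional ℝ W] (hW : IsIrreducibleSubrep ρ W) {T : E →ₗ[ℝ] E} (hT : T.IsSymmetric)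
    (hTρ : ∀ g x, T (ρ g x) = ρ g (T x)) (hTW : ∀ x ∈ W, T x ∈ W) :
    ∃ μ : ℝ, ∀ x ∈ W, T x = μ • x := by
  have : Nontrivial W := Submodule.nontrivial_iff_ne_bot.2 hW.1
  obtain ⟨μ, hμ⟩ : ∃ μ, Module.End.HasEigenvalue (T.restrict hTW) μ :=
    ⟨_, (hT.restrict_invariant hTW).hasEigenvalue_iSup_of_finiteDimensional⟩
  obtain ⟨z, hz⟩ := hμ.exists_hasEigenvector
  let U : Submodule ℝ E := W ⊓ Module.End.eigenspace T μ
  have mem_U {x : E} : x ∈ U ↔ x ∈ W ∧ T x = μ • x := by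
    rw [Submodule.mem_inf, Module.End.mem_eigenspace_iff]
  have hU : IsInvariantSubspace ρ U := fun g x hx =>
    mem_U.2 ⟨hW.2.1 g x (mem_U.1 hx).1, by rw [hTρ, (mem_U.1 hx).2, map_smul]⟩
  have hzU : (z : E) ∈ U := mem_U.2 ⟨z.2, congrArg Subtype.val hz.apply_eq_smul⟩
  have hU₀ : U ≠ ⊥ := (Submodule.ne_bot_iff U).2 ⟨z, hzU, by simpa using hz.2⟩
  have hUW : U = W := hW.eq_of_le hU hU₀ inf_le_left
  exact ⟨μ, fun x hx => (mem_U.1 (hUW ▸ hx)).2⟩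

lemma IsIrreducibleSubrep.exists_norm_starProjection_eq {W₁ W₂ : Submodule ℝ E}
    [FiniteDimensional ℝ W₁] [W₂.HasOrthogonalProjection] (h₁ : IsIrreducibleSubrep ρ W₁)
    (h₂ : IsInvariantSubspace ρ W₂) :
    ∃ c : ℝ, ∀ x ∈ W₁, ‖W₂.starProjection x‖ = c * ‖x‖ := by
  let P₁ := W₁.starProjection
  let P₂ := W₂.starProjection
  let T : E →ₗ[ℝ] E := P₁.toLinearMap ∘ₗ P₂.toLinearMap ∘ₗ P₁.toLinearMap
  have hT : T.IsSymmetric := fun x y => by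
    simp only [T, LinearMap.comp_apply, ContinuousLinearMap.coe_coe, P₁, P₂,
      Submodule.inner_starProjection_left_eq_right]
  obtain ⟨μ, hμ⟩ := h₁.exists_eq_smul_of_isSymmetric hT
    (fun g x => by simp [T, P₁, P₂, h₁.2.1.starProjection_rep, h₂.starProjection_rep])
    (fun x _ => W₁.starProjection_apply_mem _)
  refine ⟨√μ, fun x hx => ?_⟩
  have hP₁x : P₁ x = x := Submodule.starProjection_eq_self_iff.2 hx
  have hsq : ‖P₂ x‖ ^ 2 = μ * ‖x‖ ^ 2 :=
    calc ‖P₂ x‖ ^ 2 = ⟪P₂ x, x⟫ := (W₂.re_inner_starProjection_eq_normSq x).symm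
      _ = ⟪T x, x⟫ := by
        simp only [T, LinearMap.comp_apply, ContinuousLinearMap.coe_coe, hP₁x, P₁,
          W₁.inner_starProjection_left_eq_right]
      _ = μ * ‖x‖ ^ 2 := by rw [hμ x hx, real_inner_smul_left, real_inner_self_eq_norm_sq]
  rw [← Real.sqrt_sq (norm_nonneg (W₂.starProjection x)), hsq, Real.sqrt_mul' _ (sq_nonneg _),
    Real.sqrt_sq (norm_nonneg x)]

/-! ### Equivalence of subrepresentations -/

lemma AreEquivalentSubreps.symm {W₁ W₂ : Submodule ℝ E} (h₁ : IsInvariantSubspace ρ W₁)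
    (h : AreEquivalentSubreps ρ W₁ W₂) : AreEquivalentSubreps ρ W₂ W₁ := by
  obtain ⟨e, he⟩ := h
  refine ⟨e.symm, fun g y hy => ?_⟩
  have hx : ρ g (e.symm y : E) ∈ W₁ := h₁ g _ (e.symm y).2
  suffices e.symm ⟨ρ g y, hy⟩ = ⟨ρ g (e.symm y : E), hx⟩ from congrArg Subtype.val this
  rw [LinearIsometryEquiv.symm_apply_eq, Subtype.ext_iff, he g (e.symm y) hx,
    LinearIsometryEquiv.apply_symm_apply]

lemma AreEquivalentSubreps.trans {W₁ W₂ W₃ : Submodule ℝ E} (h₂ : IsInvariantSubspace ρ W₂)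
    (h₁₂ : AreEquivalentSubreps ρ W₁ W₂) (h₂₃ : AreEquivalentSubreps ρ W₂ W₃) :
    AreEquivalentSubreps ρ W₁ W₃ := by
  obtain ⟨e, he⟩ := h₁₂
  obtain ⟨f, hf⟩ := h₂₃
  refine ⟨e.trans f, fun g x hx => ?_⟩
  have hy : ρ g (e x : E) ∈ W₂ := h₂ g _ (e x).2
  have hex : e ⟨ρ g x, hx⟩ = ⟨ρ g (e x : E), hy⟩ := Subtype.ext (he g x hx)
  rw [LinearIsometryEquiv.trans_apply, LinearIsometryEquiv.trans_apply, hex, hf g (e x) hy]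

lemma areEquivalentSubreps_map {W : Submodule ℝ E} {T : E →ₗ[ℝ] E}
    (hTρ : ∀ g x, T (ρ g x) = ρ g (T x)) (hT : ∀ x ∈ W, ‖T x‖ = ‖x‖) :
    AreEquivalentSubreps ρ W (W.map T) := by
  let F : W →ₗᵢ[ℝ] W.map T := ⟨T.submoduleMap W, fun x => hT x x.2⟩
  exact ⟨LinearIsometryEquiv.ofSurjective F (T.submoduleMap_surjective W), fun g x _ => hTρ g x⟩

lemma IsIrreducibleSubrep.areEquivalentSubreps_of_not_isOrtho {W₁ W₂ : Submodule ℝ E}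
    [FiniteDimensional ℝ W₁] [W₂.HasOrthogonalProjection] (h₁ : IsIrreducibleSubrep ρ W₁)
    (h₂ : IsIrreducibleSubrep ρ W₂) (hW : ¬ W₁ ⟂ W₂) : AreEquivalentSubreps ρ W₁ W₂ := by
  let P := W₂.starProjection
  have hPρ : ∀ g x, P (ρ g x) = ρ g (P x) := h₂.2.1.starProjection_rep
  obtain ⟨c, hc⟩ := h₁.exists_norm_starProjection_eq h₂.2.1
  obtain ⟨z, hz, hPz⟩ : ∃ z ∈ W₁, P z ≠ 0 := by
    contrapose! hW
    exact fun x hx => W₂.starProjection_apply_eq_zero_iff.1 (hW x hx)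
  have hc₀ : 0 < c := pos_of_mul_pos_left (hc z hz ▸ norm_pos_iff.2 hPz) (norm_nonneg z)
  let T : E →ₗ[ℝ] E := c⁻¹ • P.toLinearMap
  have hTρ : ∀ g x, T (ρ g x) = ρ g (T x) := fun g x => by simp [T, hPρ]
  have hT : ∀ x ∈ W₁, ‖T x‖ = ‖x‖ := fun x hx => by
    simp [T, P, norm_smul, hc x hx, abs_of_pos hc₀, hc₀.ne']
  have hmap : W₁.map T = W₂ := by
    refine h₂.eq_of_le ?_ ((Submodule.ne_bot_iff _).2 ⟨T z, ⟨z, hz, rfl⟩, ?_⟩) ?_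
    · rintro g _ ⟨x, hx, rfl⟩
      exact ⟨ρ g x, h₁.2.1 g x hx, hTρ g x⟩
    · exact smul_ne_zero (inv_ne_zero hc₀.ne') hPz
    · rintro _ ⟨x, -, rfl⟩
      exact W₂.smul_mem _ (W₂.starProjection_apply_mem x)
  exact hmap ▸ areEquivalentSubreps_map hTρ hT

/-! ### Multiplicity-free representations -/

/-- The representation is multiplicity free: no two distinct irreducible subspaces are
equivalent. This is the decomposition-free form of the condition that each irreducible
representation occurs at most once. -/
def IsMultiplicityFree (ρ : Γ →* (E ≃ₗᵢ[ℝ] E)) : Prop :=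
  ∀ W₁ W₂, IsIrreducibleSubrep ρ W₁ → IsIrreducibleSubrep ρ W₂ →
    AreEquivalentSubreps ρ W₁ W₂ → W₁ = W₂

lemma le_of_isOrtho_of_sup_eq_top {A B W : Submodule ℝ E} (hAB : A ⟂ B) (hsup : A ⊔ B = ⊤)
    (hWB : W ⟂ B) : W ≤ A :=
  calc W ≤ (A ⊔ B) ⊓ Bᗮ := le_inf (hsup ▸ le_top) hWB.le
    _ = A ⊔ B ⊓ Bᗮ := sup_inf_assoc_of_le B hAB.le
    _ = A := by rw [B.inf_orthogonal_eq_bot, sup_bot_eq]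

lemma IsIrreducibleSubrep.exists_eq_of_iSup_eq_top [FiniteDimensional ℝ E] {ι : Type*}
    {V : ι → Submodule ℝ E} (hirr : ∀ i, IsIrreducibleSubrep ρ (V i)) (hspan : ⨆ i, V i = ⊤)
    (hV : Pairwise fun i j => ¬ AreEquivalentSubreps ρ (V i) (V j)) {W : Submodule ℝ E}
    (hW : IsIrreducibleSubrep ρ W) : ∃ i, W = V i := by
  obtain ⟨i, hi⟩ : ∃ i, ¬ W ⟂ V i := by
    by_contra! h
    refine hW.1 (Submodule.isOrtho_top_right.1 ?_)
    exact hspan ▸ Submodule.isOrtho_iSup_right.2 h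
  have hWi : AreEquivalentSubreps ρ W (V i) := hW.areEquivalentSubreps_of_not_isOrtho (hirr i) hi
  have hWj : ∀ j ≠ i, W ⟂ V j := fun j hj => by
    by_contra h
    exact hV hj.symm ((hWi.symm hW.2.1).trans hW.2.1
      (hW.areEquivalentSubreps_of_not_isOrtho (hirr j) h))
  have hVj : ∀ j ≠ i, V i ⟂ V j := fun j hj => by
    by_contra h
    exact hV hj.symm ((hirr i).areEquivalentSubreps_of_not_isOrtho (hirr j) h)
  have hle : W ≤ V i := le_of_isOrtho_of_sup_eq_top (B := ⨆ j ≠ i, V j)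
    (by simpa only [Submodule.isOrtho_iSup_right] using hVj)
    (by rw [← hspan, ← iSup_split_single V i])
    (by simpa only [Submodule.isOrtho_iSup_right] using hWj)
  exact ⟨i, (hirr i).eq_of_le hW.2.1 hW.1 hle⟩

lemma isMultiplicityFree_of_iSup_eq_top [FiniteDimensional ℝ E] {ι : Type*}
    {V : ι → Submodule ℝ E} (hirr : ∀ i, IsIrreducibleSubrep ρ (V i)) (hspan : ⨆ i, V i = ⊤)
    (hV : Pairwise fun i j => ¬ AreEquivalentSubreps ρ (V i) (V j)) :
    IsMultiplicityFree ρ := by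
  intro W₁ W₂ h₁ h₂ hW
  obtain ⟨i, rfl⟩ := h₁.exists_eq_of_iSup_eq_top hirr hspan hV
  obtain ⟨j, rfl⟩ := h₂.exists_eq_of_iSup_eq_top hirr hspan hV
  by_contra hij
  exact hV (fun h => hij (congrArg V h)) hW

lemma IsMultiplicityFree.isOrtho [FiniteDimensional ℝ E] (hρ : IsMultiplicityFree ρ)
    {W₁ W₂ : Submodule ℝ E} (h₁ : IsIrreducibleSubrep ρ W₁) (h₂ : IsIrreducibleSubrep ρ W₂)
    (hne : W₁ ≠ W₂) : W₁ ⟂ W₂ := by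
  by_contra h
  exact hne (hρ W₁ W₂ h₁ h₂ (h₁.areEquivalentSubreps_of_not_isOrtho h₂ h))

lemma IsMultiplicityFree.finrank_fixedSubspace_le_one [FiniteDimensional ℝ E]
    (hρ : IsMultiplicityFree ρ) : Module.finrank ℝ (fixedSubspace ρ) ≤ 1 := by
  rcases eq_or_ne (fixedSubspace ρ) ⊥ with hbot | hne
  · rw [hbot, finrank_bot]
    exact zero_le_one
  obtain ⟨x, hx, hx₀⟩ := (Submodule.ne_bot_iff _).1 hne
  suffices fixedSubspace ρ ≤ ℝ ∙ x from
    (Submodule.finrank_mono this).trans_eq (finrank_span_singleton hx₀)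
  intro y hy
  by_contra hyx
  -- The lines through `x`, `y` and `x + y` cannot be pairwise orthogonal.
  have inner_eq_zero {z : E} (hz : z ∈ fixedSubspace ρ) (hzx : z ∉ ℝ ∙ x) : ⟪x, z⟫ = 0 := by
    have hz₀ : z ≠ 0 := fun h => hzx (h ▸ zero_mem _)
    refine (hρ.isOrtho (isIrreducibleSubrep_span_singleton hx hx₀)
      (isIrreducibleSubrep_span_singleton hz hz₀) fun hxz => hzx ?_).inner_eq
      (Submodule.mem_span_singleton_self x) (Submodule.mem_span_singleton_self z)
    exact hxz ▸ Submodule.mem_span_singleton_self z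
  have hxy : x + y ∉ ℝ ∙ x := by
    rwa [Submodule.add_mem_iff_right _ (Submodule.mem_span_singleton_self x)]
  have hxx : ⟪x, x⟫ = 0 := by
    simpa [inner_add_right, inner_eq_zero hy hyx] using inner_eq_zero (add_mem hx hy) hxy
  exact hx₀ (inner_self_eq_zero.1 hxx)

lemma IsMultiplicityFree.exists_orbitSpan_eq_top [FiniteDimensional ℝ E]
    (hρ : IsMultiplicityFree ρ) : ∃ s, orbitSpan ρ s = ⊤ := by
  let V : {W // IsIrreducibleSubrep ρ W} → Submodule ℝ E := Subtype.val
  have horth : Pairwise fun W₁ W₂ => V W₁ ⟂ V W₂ := fun W₁ W₂ hne =>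
    hρ.isOrtho W₁.2 W₂.2 (Subtype.coe_injective.ne hne)
  have hindep : iSupIndep V := (OrthogonalFamily.of_pairwise horth).independent
  have : Finite {W // IsIrreducibleSubrep ρ W} :=
    WellFoundedGT.finite_of_iSupIndep hindep fun W => W.2.1
  have := Fintype.ofFinite {W // IsIrreducibleSubrep ρ W}
  choose w hwV hw₀ using fun W : {W // IsIrreducibleSubrep ρ W} =>
    (Submodule.ne_bot_iff _).1 W.2.1
  have hcomp : ∀ W, ⟪∑ W', w W', w W⟫ = ⟪w W, w W⟫ := fun W => by
    rw [sum_inner]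
    exact Fintype.sum_eq_single W fun W' hne => (horth hne).inner_eq (hwV W') (hwV W)
  refine ⟨∑ W, w W, ?_⟩
  by_contra h
  obtain ⟨W, hW, hirr⟩ := (isInvariantSubspace_orbitSpan ρ (∑ W, w W)).orthogonal
    |>.exists_isIrreducibleSubrep_le (mt (Submodule.orthogonal_eq_bot_iff).1 h)
  have hperp : ⟪∑ W, w W, w ⟨W, hirr⟩⟫ = 0 :=
    hW (hwV ⟨W, hirr⟩) _ (mem_orbitSpan_self ρ _)
  exact hw₀ ⟨W, hirr⟩ (inner_self_eq_zero.1 (hcomp ⟨W, hirr⟩ ▸ hperp))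

/-! ### Orbits in a half-space -/

lemma exists_mem_fixedSubspace_of_convex [CompleteSpace E] {C : Set E} (hne : C.Nonempty)
    (hclosed : IsClosed C) (hconv : Convex ℝ C) (hinv : ∀ g, ∀ x ∈ C, ρ g x ∈ C) :
    ∃ x ∈ C, x ∈ fixedSubspace ρ := by
  obtain ⟨p, hp, hmin⟩ := exists_norm_eq_iInf_of_complete_convex hne hclosed.isComplete hconv 0
  have hinner := (norm_eq_iInf_iff_real_inner_le_zero hconv hp).1 hmin
  refine ⟨p, hp, fun g => ?_⟩
  have hle : ‖p‖ ^ 2 ≤ ⟪p, ρ g p⟫ := by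
    have := hinner (ρ g p) (hinv g p hp)
    rw [zero_sub, inner_neg_left, inner_sub_right, real_inner_self_eq_norm_sq] at this
    linarith
  have hsq : ‖ρ g p - p‖ ^ 2 ≤ 0 := by
    rw [norm_sub_sq_real, LinearIsometryEquiv.norm_map, real_inner_comm]
    linarith
  exact sub_eq_zero.1 (norm_eq_zero.1 (pow_eq_zero_iff two_ne_zero |>.1
    (le_antisymm hsq (sq_nonneg _))))

lemma nonneg_of_forall_inner_le [CompleteSpace E] (hfix : fixedSubspace ρ = ⊥) {p v : E} {c : ℝ}
    (hle : ∀ g, ⟪p, ρ g v⟫ ≤ c) : 0 ≤ c := by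
  let C : Set E := ⋂ g, {x | ⟪p, ρ g x⟫ ≤ c}
  have hclosed : IsClosed C :=
    isClosed_iInter fun g => isClosed_le (by fun_prop) continuous_const
  have hconv : Convex ℝ C := convex_iInter fun g =>
    convex_halfSpace_le (innerₛₗ ℝ p ∘ₗ (ρ g).toLinearMap).isLinear c
  have hinv : ∀ h, ∀ x ∈ C, ρ h x ∈ C := fun h x hx => Set.mem_iInter.2 fun g => by
    rw [Set.mem_ofPred_eq, ← rep_mul_apply]
    exact Set.mem_iInter.1 hx (g * h)
  obtain ⟨z, hzC, hz⟩ :=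
    exists_mem_fixedSubspace_of_convex ⟨v, Set.mem_iInter.2 hle⟩ hclosed hconv hinv
  rw [hfix, Submodule.mem_bot] at hz
  simpa [hz] using Set.mem_iInter.1 hzC 1

lemma exists_forall_inner_neg_of_mem_span (s : Set E)
    [FiniteDimensional ℝ (Submodule.span ℝ s)] :
    ∃ p : E, ∀ w ∈ Submodule.span ℝ s, w ≠ 0 → (∀ x ∈ s, ⟪x, w⟫ ≤ 0) → ⟪p, w⟫ < 0 := by
  obtain ⟨t, hts, ht⟩ := Submodule.fg_span_iff_fg_span_finset_subset s |>.1
    (Module.Finite.iff_fg.1 ‹FiniteDimensional ℝ (Submodule.span ℝ s)›)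
  refine ⟨∑ x ∈ t, x, fun w hw hw₀ hle => ?_⟩
  have hle' : ∀ x ∈ t, ⟪x, w⟫ ≤ 0 := fun x hx => hle x (hts hx)
  rw [sum_inner]
  refine (Finset.sum_nonpos hle').lt_of_ne fun hsum => hw₀ ?_
  have hperp : Submodule.span ℝ (t : Set E) ⟂ ℝ ∙ w :=
    Submodule.isOrtho_span.2 fun x hx y hy => by
      rw [Set.mem_singleton_iff.1 hy]
      exact (Finset.sum_eq_zero_iff_of_nonpos hle').1 hsum x hx
  exact inner_self_eq_zero.1 (hperp.inner_eq (ht ▸ hw) (Submodule.mem_span_singleton_self w))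

lemma eq_zero_of_mem_orbitSpan_of_forall_inner_nonpos [FiniteDimensional ℝ E]
    (hfix : fixedSubspace ρ = ⊥) {u v : E} (hv : v ∈ orbitSpan ρ u)
    (hle : ∀ g, ⟪ρ g u, v⟫ ≤ 0) : v = 0 := by
  by_contra hv₀
  obtain ⟨p, hp⟩ := exists_forall_inner_neg_of_mem_span (Set.range fun g => ρ g u)
  let S : Set E := Metric.sphere 0 ‖v‖ ∩ (orbitSpan ρ u ∩ ⋂ g, {w | ⟪ρ g u, w⟫ ≤ 0})
  have hS : IsCompact S := (isCompact_sphere 0 ‖v‖).inter_right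
    ((orbitSpan ρ u).closed_of_finiteDimensional.inter
      (isClosed_iInter fun g => isClosed_le (by fun_prop) continuous_const))
  have hvS : ∀ g, ρ g v ∈ S := fun g => by
    refine ⟨by simp, isInvariantSubspace_orbitSpan ρ u g v hv, Set.mem_iInter.2 fun h => ?_⟩
    rw [Set.mem_ofPred_eq, real_inner_comm, inner_rep_left, real_inner_comm, ← rep_mul_apply]
    exact hle (g⁻¹ * h)
  -- Compactness bounds `⟪p, ·⟫` on the orbit of `v` by the negative number `⟪p, w⟫`.
  obtain ⟨w, hw, hmax⟩ := hS.exists_isMaxOn ⟨_, hvS 1⟩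
    (f := fun w => ⟪p, w⟫) (by fun_prop : Continuous fun w => ⟪p, w⟫).continuousOn
  have hneg : ⟪p, w⟫ < 0 := by
    refine hp w hw.2.1 (ne_zero_of_mem_sphere (norm_ne_zero_iff.2 hv₀) ⟨w, hw.1⟩) ?_
    rintro _ ⟨g, rfl⟩
    exact Set.mem_iInter.1 hw.2.2 g
  exact hneg.not_ge (nonneg_of_forall_inner_le hfix fun g => hmax (hvS g))

lemma mem_orthogonal_orbitSpan_of_forall_inner_nonpos [FiniteDimensional ℝ E]
    (hfix : fixedSubspace ρ = ⊥) {u v : E} (hle : ∀ g, ⟪ρ g u, v⟫ ≤ 0) :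
    v ∈ (orbitSpan ρ u)ᗮ := by
  rw [← Submodule.starProjection_apply_eq_zero_iff]
  refine eq_zero_of_mem_orbitSpan_of_forall_inner_nonpos hfix
    (Submodule.starProjection_apply_mem _ v) fun g => ?_
  rw [← Submodule.inner_starProjection_left_eq_right,
    Submodule.starProjection_eq_self_iff.2 (rep_mem_orbitSpan ρ g u)]
  exact hle g

theorem exists_equivalent_summands_of_radius_eq_half_pi_general [FiniteDimensional ℝ E]
    [Nontrivial E] (hfix : Module.finrank ℝ (fixedSubspace ρ) ≠ 1) {ι : Type*}
    (V : ι → Submodule ℝ E) (hspan : ⨆ i, V i = ⊤) (hirr : ∀ i, IsIrreducibleSubrep ρ (V i))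
    (hrad : ∀ u : E, ‖u‖ = 1 → ∃ v : E, ‖v‖ = 1 ∧ ∀ g, ⟪ρ g u, v⟫ ≤ 0) :
    ∃ i j, i ≠ j ∧ AreEquivalentSubreps ρ (V i) (V j) := by
  by_contra! hV
  have hρ : IsMultiplicityFree ρ := isMultiplicityFree_of_iSup_eq_top hirr hspan hV
  have hbot : fixedSubspace ρ = ⊥ := Submodule.finrank_eq_zero.1 <|
    Nat.lt_one_iff.1 (hρ.finrank_fixedSubspace_le_one.lt_of_ne hfix)
  obtain ⟨s, hs⟩ := hρ.exists_orbitSpan_eq_top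
  have hs₀ : s ≠ 0 := by
    rintro rfl
    simp [orbitSpan] at hs
  obtain ⟨v, hv, hle⟩ := hrad (‖s‖⁻¹ • s) (norm_smul_inv_norm hs₀)
  have hle' : ∀ g, ⟪ρ g s, v⟫ ≤ 0 := fun g => by
    have := hle g
    rw [map_smul, real_inner_smul_left] at this
    exact nonpos_of_mul_nonpos_right this (inv_pos.2 (norm_pos_iff.2 hs₀))
  have hv₀ : v = 0 := by
    simpa [hs] using mem_orthogonal_orbitSpan_of_forall_inner_nonpos hbot hle'
  simp [hv₀] at hv

end Representation

/-- If a fixed point free orthogonal representation `ρ : Γ → O(n+1)` of a finite group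
decomposes as an orthogonal direct sum of `k ≥ 2` irreducible subrepresentations and the
space form `Sⁿ/ρ(Γ)` has radius `π/2` (equivalently: for every unit vector `u` there is a
unit vector `v` with `⟪ρ(g)u, v⟫ ≤ 0` for all `g`), then two distinct summands are
equivalent. -/
theorem exists_equivalent_summands_of_radius_eq_half_pi
    {n k : ℕ} {Γ : Type*} [Group Γ] [Fintype Γ] (hk : 2 ≤ k)
    (ρ : Γ →* (EuclideanSpace ℝ (Fin (n + 1)) ≃ₗᵢ[ℝ] EuclideanSpace ℝ (Fin (n + 1))))
    (hfree : ∀ g : Γ, g ≠ 1 → ∀ x : EuclideanSpace ℝ (Fin (n + 1)), x ≠ 0 → ρ g x ≠ x)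
    (V : Fin k → Submodule ℝ (EuclideanSpace ℝ (Fin (n + 1))))
    (horth : ∀ i j, i ≠ j → ∀ x ∈ V i, ∀ y ∈ V j, ⟪x, y⟫ = 0)
    (hspan : (⨆ i, V i) = ⊤)
    (hirr : ∀ i, IsIrreducibleSubrep ρ (V i))
    (hrad : ∀ u : EuclideanSpace ℝ (Fin (n + 1)), ‖u‖ = 1 →
      ∃ v : EuclideanSpace ℝ (Fin (n + 1)), ‖v‖ = 1 ∧ ∀ g : Γ, ⟪ρ g u, v⟫ ≤ 0) :
    ∃ i j, i ≠ j ∧ AreEquivalentSubreps ρ (V i) (V j) := by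
  let i₀ : Fin k := ⟨0, by lia⟩
  let i₁ : Fin k := ⟨1, by lia⟩
  have hortho : V i₀ ⟂ V i₁ :=
    Submodule.isOrtho_iff_inner_eq.2 (horth i₀ i₁ (by simp [i₀, i₁]))
  have hdim := one_lt_finrank_of_isOrtho (hirr i₀).1 (hirr i₁).1 hortho
  exact exists_equivalent_summands_of_radius_eq_half_pi_general
    (finrank_fixedSubspace_ne_one_of_free hdim.ne' hfree) V hspan hirr hrad
end

section
/- Let Γ be a finite group, ρ: Γ → O(n+1) a fixed point free orthogonal representation with rad S^n/ρ(Γ) = π/2, and σ: Γ → O(d) another fixed point free orthogonal representation of Γ. Then rad S^{n+d}/(ρ ⊕ σ)(Γ) = π/2, where ρ ⊕ σ acts on ℝ^{n+1} ⊕ ℝ^d. -/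
open scoped RealInnerProductSpace

/-!
Extend the angle between orbits, `⨅ g, arccos ⟪ρ g u, v⟫`, to vectors that need not have norm one.
Scaling a vector by `t ∈ [0, 1]` scales every inner product and so moves every angle towards
`π / 2`. Since `⟪(ρ ⊕ σ) g (u, 0), (x, y)⟫ = ⟪ρ g u, x⟫`, the angles from `(u, 0)` to unit vectors
are angles from `u` to vectors of norm at most one, hence bounded by the larger of `π / 2` and the
eccentricity of `u`. Conversely, the angles from a unit vector `(x, y)` to the vectors `(w, 0)` are
the angles from `x`, of norm at most one, to `w`, and their supremum is at least the smaller of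
`π / 2` and the radius of `ρ`. So the radius of `ρ ⊕ σ` lies between `π / 2` and the radius of `ρ`.
-/

open Real

lemma arccos_mul_le_max {t : ℝ} (ht₀ : 0 ≤ t) (ht₁ : t ≤ 1) (c : ℝ) :
    arccos (t * c) ≤ max (π / 2) (arccos c) := by
  rcases le_total 0 c with hc | hc
  · exact le_max_of_le_left (arccos_le_pi_div_two.2 (mul_nonneg ht₀ hc))
  · exact le_max_of_le_right (arccos_le_arccos (le_mul_of_le_one_left hc ht₁))

lemma min_le_arccos_mul {t : ℝ} (ht₀ : 0 ≤ t) (ht₁ : t ≤ 1) (c : ℝ) :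
    min (π / 2) (arccos c) ≤ arccos (t * c) := by
  rcases le_total 0 c with hc | hc
  · exact min_le_of_right_le (arccos_le_arccos (mul_le_of_le_one_left hc ht₁))
  · rw [← arccos_zero]
    exact min_le_of_left_le (arccos_le_arccos (mul_nonpos_of_nonneg_of_nonpos ht₀ hc))

section UnitVectors

variable {E : Type*} [NormedAddCommGroup E] [NormedSpace ℝ E] [Nontrivial E]

lemma exists_norm_eq_one_and_norm_smul_eq (x : E) :
    ∃ w : E, ‖w‖ = 1 ∧ ‖x‖ • w = x := by
  rcases eq_or_ne x 0 with rfl | hx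
  · obtain ⟨w, hw⟩ := exists_norm_eq E zero_le_one
    exact ⟨w, hw, by rw [norm_zero, zero_smul]⟩
  · exact ⟨NormedSpace.normalize x, NormedSpace.norm_normalize_eq_one_iff.2 hx,
      NormedSpace.norm_smul_normalize x⟩

lemma nonempty_norm_eq_one : Nonempty {x : E // ‖x‖ = 1} :=
  nonempty_subtype.2 (exists_norm_eq E zero_le_one)

end UnitVectors

section OrbitAngle

variable {Γ E : Type*} [Group Γ] [NormedAddCommGroup E] [InnerProductSpace ℝ E]

/-- For unit vectors `u` and `v`, the distance between their orbits in the quotient of the unit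
sphere by `ρ`. It is defined for all vectors, without normalizing, so that it can be evaluated at
the components of a vector in a direct sum. -/
noncomputable def orbitAngle (ρ : Γ →* (E ≃ₗᵢ[ℝ] E)) (u v : E) : ℝ :=
  ⨅ g : Γ, arccos ⟪ρ g u, v⟫

/-- For a unit vector `u`, the largest distance from the orbit of `u` to a point of the quotient of
the unit sphere by `ρ`. Only the second vector is restricted to the unit sphere. -/
noncomputable def orbitEccentricity (ρ : Γ →* (E ≃ₗᵢ[ℝ] E)) (u : E) : ℝ :=
  ⨆ v : {x : E // ‖x‖ = 1}, orbitAngle ρ u v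

lemma orbitAngle_nonneg (ρ : Γ →* (E ≃ₗᵢ[ℝ] E)) (u v : E) : 0 ≤ orbitAngle ρ u v :=
  Real.iInf_nonneg fun _ => arccos_nonneg _

lemma orbitAngle_le_arccos (ρ : Γ →* (E ≃ₗᵢ[ℝ] E)) (u v : E) (g : Γ) :
    orbitAngle ρ u v ≤ arccos ⟪ρ g u, v⟫ :=
  ciInf_le ⟨0, Set.forall_mem_range.2 fun _ => arccos_nonneg _⟩ g

lemma orbitAngle_le_orbitEccentricity (ρ : Γ →* (E ≃ₗᵢ[ℝ] E)) (u : E) {v : E} (hv : ‖v‖ = 1) :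
    orbitAngle ρ u v ≤ orbitEccentricity ρ u :=
  le_ciSup (f := fun v : {x : E // ‖x‖ = 1} => orbitAngle ρ u v)
    ⟨π, Set.forall_mem_range.2 fun _ => (orbitAngle_le_arccos ρ u _ 1).trans (arccos_le_pi _)⟩
    ⟨v, hv⟩

lemma orbitEccentricity_nonneg (ρ : Γ →* (E ≃ₗᵢ[ℝ] E)) (u : E) : 0 ≤ orbitEccentricity ρ u :=
  Real.iSup_nonneg fun _ => orbitAngle_nonneg ρ u _

lemma sphereQuotRadius_eq_iInf_orbitEccentricity [Fintype Γ] (ρ : Γ →* (E ≃ₗᵢ[ℝ] E)) :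
    sphereQuotRadius ρ = ⨅ u : {x : E // ‖x‖ = 1}, orbitEccentricity ρ u :=
  rfl

lemma sphereQuotRadius_le_orbitEccentricity [Fintype Γ] (ρ : Γ →* (E ≃ₗᵢ[ℝ] E)) {u : E}
    (hu : ‖u‖ = 1) : sphereQuotRadius ρ ≤ orbitEccentricity ρ u :=
  ciInf_le (f := fun u : {x : E // ‖x‖ = 1} => orbitEccentricity ρ u)
    ⟨0, Set.forall_mem_range.2 fun _ => orbitEccentricity_nonneg ρ _⟩ ⟨u, hu⟩

lemma orbitAngle_smul_right_le_max (ρ : Γ →* (E ≃ₗᵢ[ℝ] E)) (u v : E) {t : ℝ} (ht₀ : 0 ≤ t)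
    (ht₁ : t ≤ 1) : orbitAngle ρ u (t • v) ≤ max (π / 2) (orbitAngle ρ u v) := by
  have angle_le (g : Γ) : orbitAngle ρ u (t • v) ≤ max (π / 2) (arccos ⟪ρ g u, v⟫) := by
    refine (orbitAngle_le_arccos ρ u (t • v) g).trans ?_
    rw [real_inner_smul_right]
    exact arccos_mul_le_max ht₀ ht₁ _
  refine le_max_iff.2 (or_iff_not_imp_left.2 fun hnot => le_ciInf fun g => ?_)
  exact (le_max_iff.1 (angle_le g)).resolve_left hnot

lemma min_le_orbitAngle_smul_left (ρ : Γ →* (E ≃ₗᵢ[ℝ] E)) (u v : E) {t : ℝ} (ht₀ : 0 ≤ t)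
    (ht₁ : t ≤ 1) : min (π / 2) (orbitAngle ρ u v) ≤ orbitAngle ρ (t • u) v := by
  refine le_ciInf fun g => ?_
  rw [map_smul, real_inner_smul_left]
  exact (min_le_min_left _ (orbitAngle_le_arccos ρ u v g)).trans (min_le_arccos_mul ht₀ ht₁ _)

lemma orbitAngle_le_max_orbitEccentricity [Nontrivial E] (ρ : Γ →* (E ≃ₗᵢ[ℝ] E)) (u : E) {v : E}
    (hv : ‖v‖ ≤ 1) : orbitAngle ρ u v ≤ max (π / 2) (orbitEccentricity ρ u) := by
  obtain ⟨w, hw, hwv⟩ := exists_norm_eq_one_and_norm_smul_eq v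
  calc orbitAngle ρ u v = orbitAngle ρ u (‖v‖ • w) := by rw [hwv]
    _ ≤ max (π / 2) (orbitAngle ρ u w) := orbitAngle_smul_right_le_max ρ u w (norm_nonneg v) hv
    _ ≤ max (π / 2) (orbitEccentricity ρ u) :=
      max_le_max_left _ (orbitAngle_le_orbitEccentricity ρ u hw)

lemma min_le_orbitEccentricity_smul (ρ : Γ →* (E ≃ₗᵢ[ℝ] E)) (u : E) {t : ℝ}
    (ht₀ : 0 ≤ t) (ht₁ : t ≤ 1) :
    min (π / 2) (orbitEccentricity ρ u) ≤ orbitEccentricity ρ (t • u) := by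
  refine min_le_iff.2 (or_iff_not_imp_left.2 fun hnot =>
    Real.iSup_le (fun v => ?_) (orbitEccentricity_nonneg ρ (t • u)))
  have min_le : min (π / 2) (orbitAngle ρ u v) ≤ orbitEccentricity ρ (t • u) :=
    (min_le_orbitAngle_smul_left ρ u v ht₀ ht₁).trans
      (orbitAngle_le_orbitEccentricity ρ (t • u) v.2)
  exact (min_le_iff.1 min_le).resolve_left hnot

lemma min_sphereQuotRadius_le_orbitEccentricity [Nontrivial E] [Fintype Γ]
    (ρ : Γ →* (E ≃ₗᵢ[ℝ] E)) {u : E} (hu : ‖u‖ ≤ 1) :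
    min (π / 2) (sphereQuotRadius ρ) ≤ orbitEccentricity ρ u := by
  obtain ⟨w, hw, hwu⟩ := exists_norm_eq_one_and_norm_smul_eq u
  calc min (π / 2) (sphereQuotRadius ρ) ≤ min (π / 2) (orbitEccentricity ρ w) :=
      min_le_min_left _ (sphereQuotRadius_le_orbitEccentricity ρ hw)
    _ ≤ orbitEccentricity ρ (‖u‖ • w) := min_le_orbitEccentricity_smul ρ w (norm_nonneg u) hu
    _ = orbitEccentricity ρ u := by rw [hwu]

end OrbitAngle

section DirectSum

variable {Γ E F : Type*} [Group Γ] [NormedAddCommGroup E] [InnerProductSpace ℝ E]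
  [NormedAddCommGroup F] [InnerProductSpace ℝ F]

/-- The direct sum `ρ ⊕ σ` of two orthogonal representations, acting componentwise on the `L²`
product. -/
noncomputable def orthogonalDirectSum (ρ : Γ →* (E ≃ₗᵢ[ℝ] E)) (σ : Γ →* (F ≃ₗᵢ[ℝ] F)) :
    Γ →* (WithLp 2 (E × F) ≃ₗᵢ[ℝ] WithLp 2 (E × F)) where
  toFun g := LinearIsometryEquiv.withLpProdCongr 2 (ρ g) (σ g)
  map_one' := by
    ext p
    simp only [map_one, LinearIsometryEquiv.withLpProdCongr_apply, LinearIsometryEquiv.coe_one,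
      id_eq]
    rfl
  map_mul' g h := by
    ext p
    simp only [map_mul, LinearIsometryEquiv.coe_mul, Function.comp_apply,
      LinearIsometryEquiv.withLpProdCongr_apply, WithLp.toLp_fst, WithLp.toLp_snd]

variable (ρ : Γ →* (E ≃ₗᵢ[ℝ] E)) (σ : Γ →* (F ≃ₗᵢ[ℝ] F))

lemma orthogonalDirectSum_apply (g : Γ) (p : WithLp 2 (E × F)) :
    orthogonalDirectSum ρ σ g p = WithLp.toLp 2 (ρ g p.fst, σ g p.snd) := by
  simp only [orthogonalDirectSum, MonoidHom.coe_mk, OneHom.coe_mk,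
    LinearIsometryEquiv.withLpProdCongr_apply]

lemma inner_orthogonalDirectSum (g : Γ) (p q : WithLp 2 (E × F)) :
    ⟪orthogonalDirectSum ρ σ g p, q⟫ = ⟪ρ g p.fst, q.fst⟫ + ⟪σ g p.snd, q.snd⟫ := by
  rw [orthogonalDirectSum_apply, WithLp.prod_inner_apply]
  rfl

lemma orbitAngle_orthogonalDirectSum_inl_left (u : E) (q : WithLp 2 (E × F)) :
    orbitAngle (orthogonalDirectSum ρ σ) (WithLp.toLp 2 (u, 0)) q = orbitAngle ρ u q.fst := by
  simp only [orbitAngle, inner_orthogonalDirectSum, WithLp.toLp_fst, WithLp.toLp_snd, map_zero,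
    inner_zero_left, add_zero]

lemma orbitAngle_orthogonalDirectSum_inl_right (p : WithLp 2 (E × F)) (w : E) :
    orbitAngle (orthogonalDirectSum ρ σ) p (WithLp.toLp 2 (w, 0)) = orbitAngle ρ p.fst w := by
  simp only [orbitAngle, inner_orthogonalDirectSum, WithLp.toLp_fst, WithLp.toLp_snd,
    inner_zero_right, add_zero]

lemma orbitEccentricity_fst_le_orthogonalDirectSum (p : WithLp 2 (E × F)) :
    orbitEccentricity ρ p.fst ≤ orbitEccentricity (orthogonalDirectSum ρ σ) p := by
  refine Real.iSup_le (fun w => ?_) (orbitEccentricity_nonneg _ p)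
  rw [← orbitAngle_orthogonalDirectSum_inl_right ρ σ]
  exact orbitAngle_le_orbitEccentricity _ p ((WithLp.norm_toLp_fst 2 E F w.1).trans w.2)

variable [Nontrivial E]

lemma orbitEccentricity_orthogonalDirectSum_inl_le_max (u : E) :
    orbitEccentricity (orthogonalDirectSum ρ σ) (WithLp.toLp 2 (u, 0)) ≤
      max (π / 2) (orbitEccentricity ρ u) := by
  have := nonempty_norm_eq_one (E := WithLp 2 (E × F))
  refine ciSup_le fun q => ?_
  rw [orbitAngle_orthogonalDirectSum_inl_left]
  exact orbitAngle_le_max_orbitEccentricity ρ u ((WithLp.norm_fst_le E q.1).trans_eq q.2)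

variable [Fintype Γ]

lemma sphereQuotRadius_orthogonalDirectSum_le_max :
    sphereQuotRadius (orthogonalDirectSum ρ σ) ≤ max (π / 2) (sphereQuotRadius ρ) := by
  have := nonempty_norm_eq_one (E := E)
  have radius_le (u : {x : E // ‖x‖ = 1}) :
      sphereQuotRadius (orthogonalDirectSum ρ σ) ≤ max (π / 2) (orbitEccentricity ρ u) :=
    (sphereQuotRadius_le_orbitEccentricity _ ((WithLp.norm_toLp_fst 2 E F u.1).trans u.2)).trans
      (orbitEccentricity_orthogonalDirectSum_inl_le_max ρ σ u.1)
  rw [sphereQuotRadius_eq_iInf_orbitEccentricity ρ]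
  refine le_max_iff.2 (or_iff_not_imp_left.2 fun hnot => le_ciInf fun u => ?_)
  exact (le_max_iff.1 (radius_le u)).resolve_left hnot

lemma min_le_sphereQuotRadius_orthogonalDirectSum :
    min (π / 2) (sphereQuotRadius ρ) ≤ sphereQuotRadius (orthogonalDirectSum ρ σ) := by
  have := nonempty_norm_eq_one (E := WithLp 2 (E × F))
  rw [sphereQuotRadius_eq_iInf_orbitEccentricity (orthogonalDirectSum ρ σ)]
  refine le_ciInf fun p => ?_
  exact (min_sphereQuotRadius_le_orbitEccentricity ρ
    ((WithLp.norm_fst_le E p.1).trans_eq p.2)).trans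
      (orbitEccentricity_fst_le_orthogonalDirectSum ρ σ p.1)

theorem radius_direct_sum_eq_half_pi_general (hρ : sphereQuotRadius ρ = π / 2) :
    sphereQuotRadius (orthogonalDirectSum ρ σ) = π / 2 := by
  apply le_antisymm
  · simpa only [hρ, max_self] using sphereQuotRadius_orthogonalDirectSum_le_max ρ σ
  · simpa only [hρ, min_self] using min_le_sphereQuotRadius_orthogonalDirectSum ρ σ

end DirectSum

/-- Let `Γ` be a finite group, `ρ : Γ → O(n+1)` a fixed point free orthogonal
representation with `rad Sⁿ/ρ(Γ) = π/2` and `σ : Γ → O(d)` another fixed point free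
orthogonal representation.  Then `rad S^{n+d}/(ρ ⊕ σ)(Γ) = π/2`, where `ρ ⊕ σ` is the
direct sum representation `τ` acting on `ℝ^{n+1} ⊕ ℝ^d` (with the `L²` product metric)
by `τ(g)(x, y) = (ρ(g)x, σ(g)y)`. -/
theorem radius_direct_sum_eq_half_pi
    {n d : ℕ} {Γ : Type*} [Group Γ] [Fintype Γ]
    (ρ : Γ →* (EuclideanSpace ℝ (Fin (n + 1)) ≃ₗᵢ[ℝ] EuclideanSpace ℝ (Fin (n + 1))))
    (σ : Γ →* (EuclideanSpace ℝ (Fin d) ≃ₗᵢ[ℝ] EuclideanSpace ℝ (Fin d)))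
    (hρfree : ∀ g : Γ, g ≠ 1 → ∀ x : EuclideanSpace ℝ (Fin (n + 1)), x ≠ 0 → ρ g x ≠ x)
    (hσfree : ∀ g : Γ, g ≠ 1 → ∀ y : EuclideanSpace ℝ (Fin d), y ≠ 0 → σ g y ≠ y)
    (hρrad : sphereQuotRadius ρ = Real.pi / 2)
    (τ : Γ →* (WithLp 2 (EuclideanSpace ℝ (Fin (n + 1)) × EuclideanSpace ℝ (Fin d)) ≃ₗᵢ[ℝ]
        WithLp 2 (EuclideanSpace ℝ (Fin (n + 1)) × EuclideanSpace ℝ (Fin d))))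
    (hτ : ∀ (g : Γ) (x : EuclideanSpace ℝ (Fin (n + 1))) (y : EuclideanSpace ℝ (Fin d)),
      τ g ((WithLp.equiv 2 (EuclideanSpace ℝ (Fin (n + 1)) × EuclideanSpace ℝ (Fin d))).symm
            (x, y)) =
        (WithLp.equiv 2 (EuclideanSpace ℝ (Fin (n + 1)) × EuclideanSpace ℝ (Fin d))).symm
          (ρ g x, σ g y)) :
    sphereQuotRadius τ = Real.pi / 2 := by
  have hτ_eq : τ = orthogonalDirectSum ρ σ :=
    MonoidHom.ext fun g => LinearIsometryEquiv.ext fun p =>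
      (hτ g p.fst p.snd).trans (orthogonalDirectSum_apply ρ σ g p).symm
  rw [hτ_eq, radius_direct_sum_eq_half_pi_general ρ σ hρrad]
end

section
/- Let d ≥ 1, let g₁, …, g_{d+1} be orthogonal transformations of ℝ^d, and let u, v be unit vectors in ℝ^d. Suppose the families (g₁u, …, g_d u) and (g₁v, …, g_d v) are each linearly independent (hence bases of ℝ^d), and let (a₁, …, a_d) and (b₁, …, b_d) be the unique coefficients with a₁g₁u + ⋯ + a_d g_d u = g_{d+1}u and b₁g₁v + ⋯ + b_d g_d v = g_{d+1}v. If (a₁, …, a_d) ≠ (b₁, …, b_d), then the d+1 vectors (g_i u, g_i v) ∈ ℝ^d × ℝ^d = ℝ^{2d}, for i = 1, …, d+1, are linearly independent. -/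
/-!
A linear relation `c` among the pairs is a relation among their first components and among their
second components. In either component the first `n` vectors are independent, so `c` is determined
by its last entry `t`: its first `n` entries are `-t • a` and also `-t • b`. As `a ≠ b`, this forces
`t = 0`, and then `c = 0`.
-/

section Ring

variable {R M N : Type*} [Ring R] [AddCommGroup M] [Module R M] [AddCommGroup N] [Module R N]
  {n : ℕ} {x : Fin (n + 1) → M} {y : Fin (n + 1) → N} {a b : Fin n → R}

theorem init_eq_neg_last_smul_of_sum_smul_eq_zero
    (hx : LinearIndependent R (Fin.init x))
    (ha : ∑ i, a i • Fin.init x i = x (Fin.last n))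
    {c : Fin (n + 1) → R} (hc : ∑ i, c i • x i = 0) :
    Fin.init c = -c (Fin.last n) • a := by
  have hrel : ∑ i, (Fin.init c + c (Fin.last n) • a) i • Fin.init x i = 0 := by
    calc
      _ = ∑ i, Fin.init c i • Fin.init x i + c (Fin.last n) • ∑ i, a i • Fin.init x i := by
        simp only [Pi.add_apply, Pi.smul_apply, smul_eq_mul, add_smul, mul_smul,
          Finset.sum_add_distrib, Finset.smul_sum]
      _ = ∑ i, c i • x i := by rw [ha, Fin.sum_univ_castSucc]; rfl
      _ = 0 := hc
  have hzero : Fin.init c + c (Fin.last n) • a = 0 :=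
    funext (Fintype.linearIndependent_iff.1 hx _ hrel)
  rw [neg_smul, eq_neg_of_add_eq_zero_left hzero]

theorem linearIndependent_pairs_of_distinct_coefficients_general [NoZeroDivisors R]
    (hx : LinearIndependent R (Fin.init x)) (hy : LinearIndependent R (Fin.init y))
    (ha : ∑ i, a i • Fin.init x i = x (Fin.last n))
    (hb : ∑ i, b i • Fin.init y i = y (Fin.last n)) (hab : a ≠ b) :
    LinearIndependent R fun i => (x i, y i) := by
  refine Fintype.linearIndependent_iff.2 fun c hc => ?_
  simp only [Prod.smul_mk, Prod.ext_iff, Prod.fst_sum, Prod.snd_sum, Prod.fst_zero,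
    Prod.snd_zero] at hc
  have hca : Fin.init c = -c (Fin.last n) • a :=
    init_eq_neg_last_smul_of_sum_smul_eq_zero hx ha hc.1
  have hcb : Fin.init c = -c (Fin.last n) • b :=
    init_eq_neg_last_smul_of_sum_smul_eq_zero hy hb hc.2
  have hlast : c (Fin.last n) = 0 := by
    obtain ⟨i, hi⟩ := Function.ne_iff.1 hab
    have hmul : -c (Fin.last n) * a i = -c (Fin.last n) * b i := congrFun (hca.symm.trans hcb) i
    exact neg_eq_zero.1 ((mul_eq_mul_left_iff.1 hmul).resolve_left hi)
  have hinit : Fin.init c = 0 := by rw [hca, hlast, neg_zero, zero_smul]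
  exact Fin.lastCases hlast (congrFun hinit)

end Ring

/-- Let `g₁, …, g_{d+1}` be orthogonal transformations of `ℝ^d` and `u, v` unit vectors.
Suppose `(g₁u, …, g_d u)` and `(g₁v, …, g_d v)` are each linearly independent (hence
bases), and let `a`, `b` be the coefficient vectors expressing `g_{d+1}u` and `g_{d+1}v`
in these bases.  If `a ≠ b`, then the `d+1` vectors `(gᵢu, gᵢv) ∈ ℝ^d × ℝ^d = ℝ^{2d}`
are linearly independent. -/
theorem linearIndependent_pairs_of_distinct_coefficients
    {d : ℕ} (g : Fin (d + 1) → (EuclideanSpace ℝ (Fin d) ≃ₗᵢ[ℝ] EuclideanSpace ℝ (Fin d)))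
    (u v : EuclideanSpace ℝ (Fin d)) (hu : ‖u‖ = 1) (hv : ‖v‖ = 1)
    (hindu : LinearIndependent ℝ fun i : Fin d => g i.castSucc u)
    (hindv : LinearIndependent ℝ fun i : Fin d => g i.castSucc v)
    (a b : Fin d → ℝ)
    (ha : ∑ i : Fin d, a i • g i.castSucc u = g (Fin.last d) u)
    (hb : ∑ i : Fin d, b i • g i.castSucc v = g (Fin.last d) v)
    (hab : a ≠ b) :
    LinearIndependent ℝ fun i : Fin (d + 1) =>
      ((g i u, g i v) : EuclideanSpace ℝ (Fin d) × EuclideanSpace ℝ (Fin d)) :=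
  linearIndependent_pairs_of_distinct_coefficients_general hindu hindv ha hb hab
end

section
/- Let Γ be a nontrivial finite group and ρ: Γ → O(n+1) a fixed point free orthogonal representation with |Γ| < n+1. Then every orbit of ρ(Γ) on S^n is contained in a proper ρ(Γ)-invariant linear subspace of ℝ^{n+1} (namely the span of the orbit), and consequently rad S^n/ρ(Γ) = π/2. -/
/-!
An orbit has at most `|Γ| < dim E` elements, so it does not span `E`, and some unit vector is
orthogonal to the whole orbit, hence at distance `π / 2` from it. No unit vector is farther away:
the sum of an orbit is a common fixed vector, hence zero, so for every `w` the inner products of `w`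
with the orbit sum to zero and one of them is nonnegative. Every orbit on the unit sphere therefore
has eccentricity exactly `π / 2`.
-/

open scoped RealInnerProductSpace

theorem span_range_ne_top_of_card_lt_rank {R M ι : Type*} [Semiring R] [StrongRankCondition R]
    [AddCommMonoid M] [Module R M] [Fintype ι] (v : ι → M)
    (h : (Fintype.card ι : Cardinal) < Module.rank R M) :
    Submodule.span R (Set.range v) ≠ ⊤ := by
  intro htop
  refine h.not_ge ?_
  calc Module.rank R M = Module.rank R (Submodule.span R (Set.range v)) := by rw [htop, rank_top]
    _ ≤ Cardinal.mk (Set.range v) := rank_span_le _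
    _ ≤ Fintype.card ι := by
      simpa only [Cardinal.mk_fintype, Cardinal.lift_natCast, Cardinal.lift_le_nat_iff] using
        Cardinal.mk_range_le_lift (f := v)

theorem exists_norm_eq_one_mem_orthogonal {𝕜 E : Type*} [RCLike 𝕜] [NormedAddCommGroup E]
    [InnerProductSpace 𝕜 E] {K : Submodule 𝕜 E} [K.HasOrthogonalProjection] (hK : K ≠ ⊤) :
    ∃ w ∈ Kᗮ, ‖w‖ = 1 := by
  obtain ⟨w, hw, hw0⟩ := Submodule.exists_mem_ne_zero_of_ne_bot
    (mt Submodule.orthogonal_eq_bot_iff.1 hK)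
  exact ⟨(‖w‖⁻¹ : 𝕜) • w, Kᗮ.smul_mem _ hw, norm_smul_inv_norm hw0⟩

section Representation

variable {k G V : Type*} [CommSemiring k] [AddCommMonoid V] [Module k V]

theorem apply_mem_span_range_apply [Monoid G] (π : Representation k G V) (v : V) (g : G) {x : V}
    (hx : x ∈ Submodule.span k (Set.range fun h => π h v)) :
    π g x ∈ Submodule.span k (Set.range fun h => π h v) := by
  suffices Submodule.span k (Set.range fun h => π h v) ≤
      (Submodule.span k (Set.range fun h => π h v)).comap (π g) from this hx
  rw [Submodule.span_le]
  rintro _ ⟨h, rfl⟩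
  exact Submodule.subset_span ⟨g * h, by simp only [map_mul, Module.End.mul_apply]⟩

theorem sum_apply_eq_zero_of_forall_fixed_eq_zero [Group G] [Fintype G] (π : Representation k G V)
    (hfix : ∀ x, (∀ g, π g x = x) → x = 0) (v : V) : ∑ g, π g v = 0 := by
  simpa only [Representation.norm, LinearMap.sum_apply] using
    hfix (π.norm v) fun g => π.self_norm_apply g v

/-- The linear representation underlying an action by linear isometries, which makes the
`Representation` API available for it. -/
def isometricRepresentation {E : Type*} [Monoid G] [SeminormedAddCommGroup E] [Module k E]
    (ρ : G →* (E ≃ₗᵢ[k] E)) : Representation k G E where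
  toFun g := (ρ g).toLinearEquiv
  map_one' := by rw [map_one]; rfl
  map_mul' g h := by rw [map_mul]; rfl

end Representation

section AngularDistance

variable {ι E : Type*} [NormedAddCommGroup E] [InnerProductSpace ℝ E] {v : ι → E}

/-- The spherical distance from `w` to the nearest member of the family `v`. It is defined for all
vectors, but is the geodesic distance only for unit vectors, since the inner product is not
normalized. For `v` the orbit of `u` it is the distance between the orbits of `u` and `w`. -/
noncomputable def angularInfDist (v : ι → E) (w : E) : ℝ :=
  ⨅ i, Real.arccos ⟪v i, w⟫

theorem exists_inner_nonneg_of_sum_eq_zero [Fintype ι] [Nonempty ι] (hv : ∑ i, v i = 0) (w : E) :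
    ∃ i, 0 ≤ ⟪v i, w⟫ := by
  have hsum : ∑ i, ⟪v i, w⟫ = 0 := by rw [← sum_inner, hv, inner_zero_left]
  by_contra! hneg
  exact (Finset.sum_neg (fun i _ => hneg i) Finset.univ_nonempty).ne hsum

theorem angularInfDist_le_pi_div_two [Fintype ι] [Nonempty ι] (hv : ∑ i, v i = 0) (w : E) :
    angularInfDist v w ≤ Real.pi / 2 := by
  obtain ⟨i, hi⟩ := exists_inner_nonneg_of_sum_eq_zero hv w
  exact ciInf_le_of_le (Set.finite_range _).bddBelow i (Real.arccos_le_pi_div_two.2 hi)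

theorem angularInfDist_eq_pi_div_two_of_mem_orthogonal [Nonempty ι] {w : E}
    (hw : w ∈ (Submodule.span ℝ (Set.range v))ᗮ) : angularInfDist v w = Real.pi / 2 := by
  have horth (i : ι) : ⟪v i, w⟫ = 0 := hw _ (Submodule.subset_span ⟨i, rfl⟩)
  simp only [angularInfDist, horth, Real.arccos_zero, ciInf_const]

theorem iSup_angularInfDist_eq_pi_div_two [Fintype ι] [Nonempty ι] (hv : ∑ i, v i = 0)
    (hspan : Submodule.span ℝ (Set.range v) ≠ ⊤) :
    ⨆ w : {x : E // ‖x‖ = 1}, angularInfDist v w = Real.pi / 2 := by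
  have : FiniteDimensional ℝ (Submodule.span ℝ (Set.range v)) :=
    FiniteDimensional.span_of_finite ℝ (Set.finite_range v)
  obtain ⟨w, hw, hw_norm⟩ := exists_norm_eq_one_mem_orthogonal hspan
  have hmax : IsGreatest (Set.range fun w : {x : E // ‖x‖ = 1} => angularInfDist v w)
      (Real.pi / 2) :=
    ⟨⟨⟨w, hw_norm⟩, angularInfDist_eq_pi_div_two_of_mem_orthogonal hw⟩,
      Set.forall_mem_range.2 fun w => angularInfDist_le_pi_div_two hv w⟩
  exact hmax.csSup_eq

end AngularDistance

section Radius

variable {Γ E : Type*} [Group Γ] [Fintype Γ] [NormedAddCommGroup E] [InnerProductSpace ℝ E]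

theorem sphereQuotRadius_eq_pi_div_two [Nontrivial E] (ρ : Γ →* (E ≃ₗᵢ[ℝ] E))
    (hfix : ∀ x, (∀ g, ρ g x = x) → x = 0)
    (hspan : ∀ u, ‖u‖ = 1 → Submodule.span ℝ (Set.range fun g => ρ g u) ≠ ⊤) :
    sphereQuotRadius ρ = Real.pi / 2 := by
  have hsum (u : E) : ∑ g, ρ g u = 0 :=
    sum_apply_eq_zero_of_forall_fixed_eq_zero (isometricRepresentation ρ) hfix u
  have hecc (u : {x : E // ‖x‖ = 1}) :
      ⨆ w : {x : E // ‖x‖ = 1}, angularInfDist (fun g => ρ g u) w = Real.pi / 2 :=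
    iSup_angularInfDist_eq_pi_div_two (hsum u) (hspan u u.2)
  have : Nonempty {x : E // ‖x‖ = 1} := nonempty_subtype.2 (exists_norm_eq E zero_le_one)
  exact (iInf_congr hecc).trans ciInf_const

theorem radius_eq_half_pi_of_card_lt_general (ρ : Γ →* (E ≃ₗᵢ[ℝ] E))
    (hfix : ∀ x, (∀ g, ρ g x = x) → x = 0)
    (hcard : (Fintype.card Γ : Cardinal) < Module.rank ℝ E) :
    (∀ u : E, Submodule.span ℝ (Set.range fun g => ρ g u) ≠ ⊤ ∧
      ∀ g, ∀ x ∈ Submodule.span ℝ (Set.range fun g => ρ g u),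
        ρ g x ∈ Submodule.span ℝ (Set.range fun g => ρ g u)) ∧
    sphereQuotRadius ρ = Real.pi / 2 := by
  have hspan (u : E) : Submodule.span ℝ (Set.range fun g => ρ g u) ≠ ⊤ :=
    span_range_ne_top_of_card_lt_rank _ hcard
  have : Nontrivial E := rank_pos_iff_nontrivial.1 (bot_le.trans_lt hcard)
  exact ⟨fun u => ⟨hspan u, fun g _ hx =>
      apply_mem_span_range_apply (isometricRepresentation ρ) u g hx⟩,
    sphereQuotRadius_eq_pi_div_two ρ hfix fun u _ => hspan u⟩

end Radius

/-- Let `Γ` be a nontrivial finite group and `ρ : Γ → O(n+1)` a fixed point free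
orthogonal representation with `|Γ| < n + 1`.  Then every orbit of `ρ(Γ)` on `Sⁿ` is
contained in a proper invariant linear subspace of `ℝ^{n+1}` (namely the span of the
orbit), and consequently `rad Sⁿ/ρ(Γ) = π/2`. -/
theorem radius_eq_half_pi_of_card_lt
    {n : ℕ} {Γ : Type*} [Group Γ] [Fintype Γ] [Nontrivial Γ]
    (ρ : Γ →* (EuclideanSpace ℝ (Fin (n + 1)) ≃ₗᵢ[ℝ] EuclideanSpace ℝ (Fin (n + 1))))
    (hfree : ∀ g : Γ, g ≠ 1 → ∀ x : EuclideanSpace ℝ (Fin (n + 1)), x ≠ 0 → ρ g x ≠ x)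
    (hcard : Fintype.card Γ < n + 1) :
    (∀ u : EuclideanSpace ℝ (Fin (n + 1)), ‖u‖ = 1 →
      Submodule.span ℝ (Set.range fun g : Γ => ρ g u) ≠ ⊤ ∧
      ∀ g : Γ, ∀ x ∈ Submodule.span ℝ (Set.range fun g : Γ => ρ g u),
        ρ g x ∈ Submodule.span ℝ (Set.range fun g : Γ => ρ g u)) ∧
    sphereQuotRadius ρ = Real.pi / 2 := by
  obtain ⟨g, hg⟩ := exists_ne (1 : Γ)
  obtain ⟨horbit, hradius⟩ := radius_eq_half_pi_of_card_lt_general ρ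
    (fun x hx => of_not_not fun hx0 => hfree g hg x hx0 (hx g))
    (Module.lt_rank_of_lt_finrank (by rwa [finrank_euclideanSpace_fin]))
  exact ⟨fun u _ => horbit u, hradius⟩
end

section
/- Let E be a finite-dimensional real inner product space and A: E → E a skew-adjoint linear map, i.e. ⟨A x, y⟩ = −⟨x, A y⟩ for all x, y ∈ E. Let V and H be orthogonal subspaces of E with A(V) ⊆ H and A(H) ⊆ V, and suppose V = K_v ⊕ L_v and H = K_h ⊕ L_h are orthogonal splittings with A(K_v) ⊆ K_h, A(L_v) ⊆ L_h, A(K_h) ⊆ K_v, and A(L_h) ⊆ L_v. Let v ∈ L_v be a unit vector maximizing ‖A w‖ over all unit vectors w ∈ L_v, and suppose A v = λ y where y is a unit vector and λ > 0. Then: (i) A y = −λ v; (ii) ‖A y‖ = max{ ‖A z‖ : z ∈ L_h, ‖z‖ = 1 }; (iii) A maps every vector of V orthogonal to v into the orthogonal complement of y; and (iv) A maps every vector of H orthogonal to y into the orthogonal complement of v. -/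
open scoped RealInnerProductSpace

/-! Skew-adjointness says that `A : L_h → L_v` is, up to sign, the adjoint of `A : L_v → L_h`, so
the two maps share their largest singular value `‖λ‖`. Hence `‖A y‖ ≤ ‖λ‖`, while
`⟪A y, v⟫ = -⟪y, A v⟫ = -λ` over `ℝ`; this is the equality case of Cauchy–Schwarz, so `v` and `y`
are paired singular vectors. The orthogonality claims follow by moving `A` across the inner
product. -/

section RCLike

open scoped InnerProductSpace ComplexConjugate

variable {𝕜 E F : Type*} [RCLike 𝕜]

theorem norm_map_le_mul_norm_of_forall_norm_eq_one [NormedAddCommGroup E] [NormedSpace 𝕜 E]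
    [SeminormedAddCommGroup F] [NormedSpace 𝕜 F] {f : E →ₗ[𝕜] F} {L : Submodule 𝕜 E} {c : ℝ}
    (hf : ∀ w ∈ L, ‖w‖ = 1 → ‖f w‖ ≤ c) {w : E} (hw : w ∈ L) : ‖f w‖ ≤ c * ‖w‖ := by
  rcases eq_or_ne w 0 with rfl | hw0
  · simp
  have hunit : ‖f ((‖w‖⁻¹ : 𝕜) • w)‖ ≤ c := hf _ (L.smul_mem _ hw) (norm_smul_inv_norm hw0)
  rwa [map_smul, norm_smul, norm_inv, RCLike.norm_coe_norm,
    inv_mul_le_iff₀ (norm_pos_iff.mpr hw0), mul_comm] at hunit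

theorem norm_adjoint_apply_le [SeminormedAddCommGroup E] [InnerProductSpace 𝕜 E]
    [SeminormedAddCommGroup F] [InnerProductSpace 𝕜 F] {T : E → F} {S : F → E}
    (hTS : ∀ x z, ⟪T x, z⟫_𝕜 = ⟪x, S z⟫_𝕜) {c : ℝ} (hc : 0 ≤ c) {z : F}
    (hT : ‖T (S z)‖ ≤ c * ‖S z‖) : ‖S z‖ ≤ c * ‖z‖ := by
  rcases (norm_nonneg (S z)).eq_or_lt with h0 | hpos
  · rw [← h0]
    positivity
  refine le_of_mul_le_mul_right ?_ hpos
  calc ‖S z‖ * ‖S z‖ = RCLike.re ⟪T (S z), z⟫_𝕜 := by rw [hTS, inner_self_eq_norm_mul_norm]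
    _ ≤ ‖T (S z)‖ * ‖z‖ := re_inner_le_norm _ _
    _ ≤ c * ‖S z‖ * ‖z‖ := by gcongr
    _ = c * ‖z‖ * ‖S z‖ := by ring

theorem adjoint_apply_eq_conj_smul_of_norm_le [NormedAddCommGroup E] [InnerProductSpace 𝕜 E]
    [SeminormedAddCommGroup F] [InnerProductSpace 𝕜 F] {T : E → F} {S : F → E}
    (hTS : ∀ x z, ⟪T x, z⟫_𝕜 = ⟪x, S z⟫_𝕜) {v : E} {y : F} {c : 𝕜} (hv : ‖v‖ = 1) (hy : ‖y‖ = 1)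
    (hTv : T v = c • y) (hSy : ‖S y‖ ≤ ‖c‖) : S y = conj c • v := by
  have hnorm : ‖conj c • v‖ = ‖c‖ := by rw [norm_smul, RCLike.norm_conj, hv, mul_one]
  have hinner : ⟪S y, v⟫_𝕜 = c := by
    rw [← inner_conj_symm, ← hTS, hTv, inner_conj_symm, inner_smul_right,
      inner_self_eq_norm_sq_to_K, hy, RCLike.ofReal_one, one_pow, mul_one]
  refine eq_of_norm_le_re_inner_eq_norm_sq (𝕜 := 𝕜) (hSy.trans_eq hnorm.symm) ?_
  rw [hnorm, inner_smul_right, hinner, RCLike.conj_mul, ← RCLike.ofReal_pow, RCLike.ofReal_re]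

theorem inner_apply_eq_zero_of_adjoint_apply_eq_smul [SeminormedAddCommGroup E]
    [InnerProductSpace 𝕜 E] [SeminormedAddCommGroup F] [InnerProductSpace 𝕜 F] {T : E → F}
    {S : F → E} (hTS : ∀ x z, ⟪T x, z⟫_𝕜 = ⟪x, S z⟫_𝕜) {v w : E} {y : F} {c : 𝕜}
    (hSy : S y = c • v) (hwv : ⟪w, v⟫_𝕜 = 0) : ⟪T w, y⟫_𝕜 = 0 := by
  rw [hTS, hSy, inner_smul_right, hwv, mul_zero]

theorem oneill_tensor_induction_step_general [NormedAddCommGroup E] [InnerProductSpace 𝕜 E]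
    (A : E →ₗ[𝕜] E) (hskew : ∀ x y : E, ⟪A x, y⟫_𝕜 = -⟪x, A y⟫_𝕜) (Lv Lh : Submodule 𝕜 E)
    (hALv : ∀ x ∈ Lv, A x ∈ Lh) (hALh : ∀ x ∈ Lh, A x ∈ Lv)
    (v : E) (hvLv : v ∈ Lv) (hv : ‖v‖ = 1) (hmax : ∀ w ∈ Lv, ‖w‖ = 1 → ‖A w‖ ≤ ‖A v‖)
    (y : E) (lam : 𝕜) (hy : ‖y‖ = 1) (hlam : lam ≠ 0) (hAv : A v = lam • y) :
    A y = -(conj lam • v) ∧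
    (y ∈ Lh ∧ ∀ z ∈ Lh, ‖z‖ = 1 → ‖A z‖ ≤ ‖A y‖) ∧
    (∀ w, ⟪w, v⟫_𝕜 = 0 → ⟪A w, y⟫_𝕜 = 0) ∧
    (∀ z, ⟪z, y⟫_𝕜 = 0 → ⟪A z, v⟫_𝕜 = 0) := by
  have hadj : ∀ x z, ⟪A x, z⟫_𝕜 = ⟪x, (-A) z⟫_𝕜 := fun x z ↦ by
    rw [hskew, LinearMap.neg_apply, inner_neg_right]
  have hnormAv : ‖A v‖ = ‖lam‖ := by rw [hAv, norm_smul, hy, mul_one]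
  have hboundLh : ∀ z ∈ Lh, ‖(-A) z‖ ≤ ‖lam‖ * ‖z‖ := fun z hz ↦
    norm_adjoint_apply_le hadj (norm_nonneg lam) <|
      norm_map_le_mul_norm_of_forall_norm_eq_one (hnormAv ▸ hmax) (Lv.neg_mem (hALh z hz))
  have hyLh : y ∈ Lh := (Lh.smul_mem_iff hlam).mp (hAv ▸ hALv v hvLv)
  have hadj_y : (-A) y = conj lam • v :=
    adjoint_apply_eq_conj_smul_of_norm_le hadj hv hy hAv (by simpa [hy] using hboundLh y hyLh)
  have hnormAy : ‖A y‖ = ‖lam‖ := by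
    rw [← norm_neg, ← LinearMap.neg_apply, hadj_y, norm_smul, RCLike.norm_conj, hv, mul_one]
  refine ⟨neg_eq_iff_eq_neg.mp hadj_y, ⟨hyLh, fun z hz hz1 ↦ ?_⟩,
    fun w ↦ inner_apply_eq_zero_of_adjoint_apply_eq_smul hadj hadj_y,
    fun z ↦ inner_apply_eq_zero_of_adjoint_apply_eq_smul hadj (c := -lam) ?_⟩
  · simpa [hz1, hnormAy] using hboundLh z hz
  · rw [LinearMap.neg_apply, hAv, neg_smul]

end RCLike

/-- Algebraic properties of the O'Neill tensor `A = A_X` of a Riemannian submersion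
(Proposition "induction step" in the appendix).  Let `A` be a skew-adjoint endomorphism
of a finite-dimensional real inner product space `E`, let `V ⊥ H` with `A(V) ⊆ H`,
`A(H) ⊆ V`, and let `V = K_v ⊕ L_v`, `H = K_h ⊕ L_h` be orthogonal splittings preserved
by `A` as indicated.  Let `v ∈ L_v` be a unit vector maximizing `‖Aw‖` over unit vectors
of `L_v`, and write `Av = λy` with `y` a unit vector and `λ > 0`.  Then:
(i) `Ay = -λv`;
(ii) `‖Ay‖ = max{‖Az‖ : z ∈ L_h, ‖z‖ = 1}` (and `y ∈ L_h`);
(iii) `A` maps vectors of `V` orthogonal to `v` into the orthogonal complement of `y`;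
(iv) `A` maps vectors of `H` orthogonal to `y` into the orthogonal complement of `v`. -/
theorem oneill_tensor_induction_step
    {E : Type*} [NormedAddCommGroup E] [InnerProductSpace ℝ E] [FiniteDimensional ℝ E]
    (A : E →ₗ[ℝ] E) (hskew : ∀ x y : E, ⟪A x, y⟫ = -⟪x, A y⟫)
    (V H : Submodule ℝ E) (hVH : ∀ x ∈ V, ∀ y ∈ H, ⟪x, y⟫ = 0)
    (hAV : ∀ x ∈ V, A x ∈ H) (hAH : ∀ y ∈ H, A y ∈ V)
    (Kv Lv Kh Lh : Submodule ℝ E)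
    (hVsplit : Kv ⊔ Lv = V) (hKLv : ∀ x ∈ Kv, ∀ y ∈ Lv, ⟪x, y⟫ = 0)
    (hHsplit : Kh ⊔ Lh = H) (hKLh : ∀ x ∈ Kh, ∀ y ∈ Lh, ⟪x, y⟫ = 0)
    (hAKv : ∀ x ∈ Kv, A x ∈ Kh) (hALv : ∀ x ∈ Lv, A x ∈ Lh)
    (hAKh : ∀ x ∈ Kh, A x ∈ Kv) (hALh : ∀ x ∈ Lh, A x ∈ Lv)
    (v : E) (hvLv : v ∈ Lv) (hv : ‖v‖ = 1)
    (hmax : ∀ w ∈ Lv, ‖w‖ = 1 → ‖A w‖ ≤ ‖A v‖)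
    (y : E) (lam : ℝ) (hy : ‖y‖ = 1) (hlam : 0 < lam) (hAv : A v = lam • y) :
    A y = -(lam • v) ∧
    (y ∈ Lh ∧ ∀ z ∈ Lh, ‖z‖ = 1 → ‖A z‖ ≤ ‖A y‖) ∧
    (∀ w ∈ V, ⟪w, v⟫ = 0 → ⟪A w, y⟫ = 0) ∧
    (∀ z ∈ H, ⟪z, y⟫ = 0 → ⟪A z, v⟫ = 0) := by
  obtain ⟨hAy, hyLh, hv_perp, hy_perp⟩ := oneill_tensor_induction_step_general A hskew Lv Lh hALv
    hALh v hvLv hv hmax y lam hy hlam.ne' hAv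
  exact ⟨hAy, hyLh, fun w _ ↦ hv_perp w, fun z _ ↦ hy_perp z⟩
end

section
/- Let E be a finite-dimensional real inner product space, A: E → E a skew-adjoint linear map (⟨A x, y⟩ = −⟨x, A y⟩ for all x, y), and let V and H be orthogonal subspaces of E with A(V) ⊆ H and A(H) ⊆ V. Then V admits an orthonormal basis u₁, …, u_m and an index k with 0 ≤ k ≤ m such that: (i) u₁, …, u_k is a basis of the kernel of the restriction of A to V; (ii) ⟨A u_i, A u_j⟩ = 0 whenever i ≠ j; and (iii) for each i > k, writing λ_i = ‖A u_i‖ > 0 and y_i = A u_i / λ_i, one has A y_i = −λ_i u_i. -/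
open scoped RealInnerProductSpace

open Module

/-!
If `A` is skew-adjoint then `A ∘ A` is symmetric, and `‖A x‖² = -⟪x, A (A x)⟫` shows that it is
negative semidefinite. When it preserves `V`, the spectral theorem diagonalizes it there; on a unit
eigenvector `u` its eigenvalue is `-‖A u‖²`, so ordering the eigenvalues decreasingly puts the
kernel of `A` first. The same identity makes the images `A uᵢ` orthogonal.
-/

section

open scoped InnerProductSpace

variable {𝕜 E F : Type*} [RCLike 𝕜] [NormedAddCommGroup E] [InnerProductSpace 𝕜 E]
  [NormedAddCommGroup F] [InnerProductSpace 𝕜 F]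

theorem exists_mem_iff_val_lt_of_isLowerSet {n : ℕ} {s : Set (Fin n)} (hs : IsLowerSet s) :
    ∃ k ≤ n, ∀ i, i ∈ s ↔ (i : ℕ) < k := by
  obtain rfl | ⟨a, rfl⟩ := hs.eq_univ_or_Iio
  · exact ⟨n, le_rfl, fun i => by simp only [Set.mem_univ, i.isLt]⟩
  · exact ⟨a, a.isLt.le, fun _ => Iff.rfl⟩

theorem ker_eq_span_of_pairwise_inner_map_eq_zero {ι M : Type*} [AddCommGroup M] [Module 𝕜 M]
    (b : Basis ι 𝕜 M) (f : M →ₗ[𝕜] F) (hf : Pairwise fun i j => ⟪f (b i), f (b j)⟫_𝕜 = 0) :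
    LinearMap.ker f = Submodule.span 𝕜 (b '' {i | f (b i) = 0}) := by
  refine le_antisymm (fun x hx => ?_) (Submodule.span_le.2 ?_)
  · rw [Basis.mem_span_image]
    intro i hi
    have hinner : ⟪f (b i), f x⟫_𝕜 = b.repr x i * ⟪f (b i), f (b i)⟫_𝕜 := calc
      _ = ∑ j ∈ (b.repr x).support, b.repr x j * ⟪f (b i), f (b j)⟫_𝕜 := by
        conv_lhs => rw [← b.linearCombination_repr x, Finsupp.linearCombination_apply]
        simp only [Finsupp.sum, map_sum, inner_sum, map_smul, inner_smul_right]
      _ = _ := Finset.sum_eq_single_of_mem i hi fun j _ hji => by rw [hf hji.symm, mul_zero]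
    rw [LinearMap.mem_ker.1 hx, inner_zero_right, eq_comm, mul_eq_zero] at hinner
    exact inner_self_eq_zero.1 (hinner.resolve_left (Finsupp.mem_support_iff.1 hi))
  · rintro _ ⟨i, hi, rfl⟩
    exact hi

theorem isSymmetric_comp_self_of_skew {A : E →ₗ[𝕜] E} (hskew : ∀ x y, ⟪A x, y⟫_𝕜 = -⟪x, A y⟫_𝕜) :
    (A ∘ₗ A).IsSymmetric := fun x y => by
  rw [LinearMap.comp_apply, LinearMap.comp_apply, hskew, hskew, neg_neg]

theorem eigenvalue_mul_norm_sq_eq_neg_norm_sq_map_of_skew {A : E →ₗ[𝕜] E}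
    (hskew : ∀ x y, ⟪A x, y⟫_𝕜 = -⟪x, A y⟫_𝕜) {x : E} {μ : ℝ} (hμ : A (A x) = (μ : 𝕜) • x) :
    μ * ‖x‖ ^ 2 = -‖A x‖ ^ 2 := by
  have h : (μ * ‖x‖ ^ 2 : 𝕜) = -(‖A x‖ : 𝕜) ^ 2 := by
    rw [← inner_self_eq_norm_sq_to_K (A x), hskew, hμ, inner_smul_right,
      inner_self_eq_norm_sq_to_K, neg_neg]
  exact_mod_cast h

theorem exists_orthonormalBasis_monotone_norm_map_of_skew {A : E →ₗ[𝕜] E}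
    (hskew : ∀ x y, ⟪A x, y⟫_𝕜 = -⟪x, A y⟫_𝕜) {V : Submodule 𝕜 E} [FiniteDimensional 𝕜 V]
    (hV : ∀ x ∈ V, A (A x) ∈ V) :
    ∃ b : OrthonormalBasis (Fin (finrank 𝕜 V)) 𝕜 V,
      (∀ i, A (A (b i)) = -(‖A (b i)‖ ^ 2 : 𝕜) • (b i : E)) ∧ Monotone fun i => ‖A (b i)‖ := by
  have hT : ((A ∘ₗ A).restrict hV).IsSymmetric :=
    (isSymmetric_comp_self_of_skew hskew).restrict_invariant hV
  have heigen (i) : A (A (hT.eigenvectorBasis rfl i)) =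
      (hT.eigenvalues rfl i : 𝕜) • (hT.eigenvectorBasis rfl i : E) :=
    congrArg Subtype.val (hT.apply_eigenvectorBasis rfl i)
  have hvalue (i) : hT.eigenvalues rfl i = -‖A (hT.eigenvectorBasis rfl i)‖ ^ 2 := by
    rw [← eigenvalue_mul_norm_sq_eq_neg_norm_sq_map_of_skew hskew (heigen i), Submodule.norm_coe,
      OrthonormalBasis.norm_eq_one, one_pow, mul_one]
  refine ⟨hT.eigenvectorBasis rfl, fun i => ?_, fun i j hij => ?_⟩
  · rw [heigen, hvalue, RCLike.ofReal_neg, RCLike.ofReal_pow]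
  · have hle := hT.eigenvalues_antitone rfl hij
    rw [hvalue, hvalue, neg_le_neg_iff] at hle
    exact le_of_sq_le_sq hle (norm_nonneg _)

theorem exists_adapted_orthonormal_basis_of_skew_general (A : E →ₗ[𝕜] E)
    (hskew : ∀ x y, ⟪A x, y⟫_𝕜 = -⟪x, A y⟫_𝕜) (V : Submodule 𝕜 E) [FiniteDimensional 𝕜 V]
    (hV : ∀ x ∈ V, A (A x) ∈ V) :
    ∃ (u : Fin (finrank 𝕜 V) → E) (k : ℕ),
      k ≤ finrank 𝕜 V ∧
      (∀ i, u i ∈ V) ∧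
      Orthonormal 𝕜 u ∧
      Submodule.span 𝕜 (Set.range u) = V ∧
      (∀ i, A (u i) = 0 ↔ (i : ℕ) < k) ∧
      (∀ x ∈ V, A x = 0 → x ∈ Submodule.span 𝕜 (u '' {i | (i : ℕ) < k})) ∧
      (∀ i j, i ≠ j → ⟪A (u i), A (u j)⟫_𝕜 = 0) ∧
      (∀ i, A (A (u i)) = -(‖A (u i)‖ ^ 2 : 𝕜) • u i) := by
  obtain ⟨b, hsq, hmono⟩ := exists_orthonormalBasis_monotone_norm_map_of_skew hskew hV
  have hlower : IsLowerSet {i | A (b i) = 0} := fun j i hij (hj : A (b j) = 0) =>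
    norm_le_zero_iff.1 ((hmono hij).trans_eq (norm_eq_zero.2 hj))
  obtain ⟨k, hk, hker⟩ := exists_mem_iff_val_lt_of_isLowerSet hlower
  have hu : Orthonormal 𝕜 fun i => (b i : E) := b.orthonormal.comp_linearIsometry V.subtypeₗᵢ
  have horth (i j) (hij : i ≠ j) : ⟪A (b i), A (b j)⟫_𝕜 = 0 := by
    rw [hskew, hsq, inner_smul_right, hu.inner_eq_zero hij, mul_zero, neg_zero]
  have hker_span : LinearMap.ker (A.domRestrict V) =
      Submodule.span 𝕜 (b '' {i | (i : ℕ) < k}) := by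
    have hinit : {i | A.domRestrict V (b i) = 0} = {i : Fin (finrank 𝕜 V) | (i : ℕ) < k} :=
      Set.ext hker
    rw [← hinit, ← b.coe_toBasis]
    refine ker_eq_span_of_pairwise_inner_map_eq_zero b.toBasis (A.domRestrict V) fun i j hij => ?_
    simpa only [b.coe_toBasis, LinearMap.domRestrict_apply] using horth i j hij
  refine ⟨fun i => b i, k, hk, fun i => (b i).2, hu, ?_, hker, fun x hx hAx => ?_, horth, hsq⟩
  · rw [← V.span_range_subtype_eq_top_iff (fun i => (b i).2)]
    simpa only [b.coe_toBasis] using b.toBasis.span_eq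
  · have hx_span : (⟨x, hx⟩ : V) ∈ Submodule.span 𝕜 (b '' {i | (i : ℕ) < k}) :=
      hker_span ▸ LinearMap.mem_ker.2 hAx
    simpa only [Set.image_image, Submodule.subtype_apply] using
      Submodule.apply_mem_span_image_of_mem_span V.subtype hx_span

end

/-- Existence of an adapted orthonormal basis for a skew-adjoint endomorphism `A`
exchanging two orthogonal subspaces `V` and `H` (the basis `u₁, …, u_m` of `V`
constructed in the appendix):  `u₁, …, u_k` is an orthonormal basis of `ker(A|_V)`,
the images `A uᵢ` are pairwise orthogonal, and for `i > k`, setting `λᵢ = ‖A uᵢ‖ > 0`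
and `yᵢ = A uᵢ / λᵢ`, one has `A yᵢ = -λᵢ uᵢ` (equivalently `A (A uᵢ) = -λᵢ² uᵢ`). -/
theorem exists_adapted_orthonormal_basis_of_skew
    {E : Type*} [NormedAddCommGroup E] [InnerProductSpace ℝ E] [FiniteDimensional ℝ E]
    (A : E →ₗ[ℝ] E) (hskew : ∀ x y : E, ⟪A x, y⟫ = -⟪x, A y⟫)
    (V H : Submodule ℝ E) (hVH : ∀ x ∈ V, ∀ y ∈ H, ⟪x, y⟫ = 0)
    (hAV : ∀ x ∈ V, A x ∈ H) (hAH : ∀ y ∈ H, A y ∈ V) :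
    ∃ (u : Fin (finrank ℝ V) → E) (k : ℕ),
      k ≤ finrank ℝ V ∧
      (∀ i, u i ∈ V) ∧
      Orthonormal ℝ u ∧
      Submodule.span ℝ (Set.range u) = V ∧
      (∀ i : Fin (finrank ℝ V), A (u i) = 0 ↔ (i : ℕ) < k) ∧
      (∀ x ∈ V, A x = 0 →
        x ∈ Submodule.span ℝ (u '' {i : Fin (finrank ℝ V) | (i : ℕ) < k})) ∧
      (∀ i j : Fin (finrank ℝ V), i ≠ j → ⟪A (u i), A (u j)⟫ = 0) ∧
      (∀ i : Fin (finrank ℝ V), k ≤ (i : ℕ) → A (A (u i)) = -(‖A (u i)‖ ^ 2) • u i) := by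
  obtain ⟨u, k, hk, hmem, hu, hspan, hz, hker, horth, hsq⟩ :=
    exists_adapted_orthonormal_basis_of_skew_general A hskew V fun x hx => hAH _ (hAV x hx)
  exact ⟨u, k, hk, hmem, hu, hspan, hz, hker, horth, fun i _ => hsq i⟩
end
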